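/- arXiv:1509.07941 — 2 statements merged into one kernel-verified Lean document; each statement's English description precedes it below -/
import Mathlib

section
/- Let n ≥ j ≥ 3 and let τ be a pattern of length j. Let Σ_n be a uniformly random permutation of [n], let W be the number of j-element index sets 1 ≤ i_1 < ⋯ < i_j ≤ n at which τ occurs in Σ_n, and let Y be a Poisson random variable with mean λ = C(n,j)/j!. Then d_TV(L(W), L(Y)) ≤ 2·D_{n,j}, where D_{n,j} = min(1, λ^{−1})·(d_1 + d_2), d_1 = C(n,j)·(C(n,j) − C(n−j,j))/(j!)², and d_2 = Σ_{s=1}^{j−1} C(n, 2j−s)·2·L_s(τ)/(2j−s)!. -/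
open scoped Classical
open Filter

noncomputable section

/-- `τ` occurs in `σ` at the strictly increasing positions given by `f`:
`f` is strictly increasing and `σ ∘ f` is order-isomorphic to `τ`. -/
def OccursAt {m n : ℕ} (τ : Equiv.Perm (Fin m)) (σ : Equiv.Perm (Fin n))
    (f : Fin m → Fin n) : Prop :=
  StrictMono f ∧ ∀ k l, σ (f k) < σ (f l) ↔ τ k < τ l

/-- `τ` occurs in `σ` at the set of positions `α` (listed in increasing order). -/
def OccursOn {m n : ℕ} (τ : Equiv.Perm (Fin m)) (σ : Equiv.Perm (Fin n))
    (α : Finset (Fin n)) : Prop :=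
  ∃ f : Fin m → Fin n, StrictMono f ∧ Finset.univ.image f = α ∧
    ∀ k l, σ (f k) < σ (f l) ↔ τ k < τ l

/-- `τ` occurs in `σ` at the consecutive (0-indexed) positions `i, i+1, …, i+m-1`. -/
def OccursConsec {m n : ℕ} (τ : Equiv.Perm (Fin m)) (σ : Equiv.Perm (Fin n)) (i : ℕ) : Prop :=
  ∃ h : i + m ≤ n, ∀ k l : Fin m,
    σ ⟨i + k, by have := k.isLt; omega⟩ < σ ⟨i + l, by have := l.isLt; omega⟩ ↔ τ k < τ l

/-- The overlap count `L_s(τ)`: the number of permutations of `[2m-s]` containing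
two occurrences of `τ` at index sets sharing exactly `s` elements. -/
def overlapCount {m : ℕ} (τ : Equiv.Perm (Fin m)) (s : ℕ) : ℕ :=
  Set.ncard {ρ : Equiv.Perm (Fin (2 * m - s)) |
    ∃ α β : Finset (Fin (2 * m - s)), α.card = m ∧ β.card = m ∧ (α ∩ β).card = s ∧
      OccursOn τ ρ α ∧ OccursOn τ ρ β}

/-- The sequential overlap count `L̄_s(τ)`: the number of permutations of `[2m-s]` with
occurrences of `τ` at positions `(1,…,m)` and `(m-s+1,…,2m-s)`. -/
def seqOverlapCount {m : ℕ} (τ : Equiv.Perm (Fin m)) (s : ℕ) : ℕ :=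
  Set.ncard {ρ : Equiv.Perm (Fin (2 * m - s)) |
    OccursConsec τ ρ 0 ∧ OccursConsec τ ρ (m - s)}

/-- The number of inversions of a permutation. -/
def invCount {n : ℕ} (σ : Equiv.Perm (Fin n)) : ℕ :=
  (Finset.univ.filter fun p : Fin n × Fin n => p.1 < p.2 ∧ σ p.2 < σ p.1).card

/-- The inversion polynomial `I_n(q) = ∏_{j=1}^n (1 + q + ⋯ + q^{j-1})`. -/
def invPoly (n : ℕ) (q : ℝ) : ℝ :=
  ∏ j ∈ Finset.range n, ∑ i ∈ Finset.range (j + 1), q ^ i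

/-- Probability of the event `E` under the uniform distribution on `S_n`. -/
def unifProb {n : ℕ} (E : Set (Equiv.Perm (Fin n))) : ℝ :=
  (E.ncard : ℝ) / (n.factorial : ℝ)

/-- Probability of the event `E` under the Mallows(q) distribution on `S_n`. -/
def mallowsProb {n : ℕ} (q : ℝ) (E : Set (Equiv.Perm (Fin n))) : ℝ :=
  (∑ σ ∈ Finset.univ.filter (· ∈ E), q ^ invCount σ) / invPoly n q

/-- Expectation of `X` under the uniform distribution on `S_n`. -/
def unifExp {n : ℕ} (X : Equiv.Perm (Fin n) → ℝ) : ℝ :=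
  (∑ σ : Equiv.Perm (Fin n), X σ) / (n.factorial : ℝ)

/-- Expectation of `X` under the Mallows(q) distribution on `S_n`. -/
def mallowsExp {n : ℕ} (q : ℝ) (X : Equiv.Perm (Fin n) → ℝ) : ℝ :=
  (∑ σ : Equiv.Perm (Fin n), X σ * q ^ invCount σ) / invPoly n q

/-- The Poisson(lam) probability mass function. -/
def poissonPMF (lam : ℝ) (k : ℕ) : ℝ :=
  Real.exp (-lam) * lam ^ k / (k.factorial : ℝ)

/-- Total variation distance between the law of the ℕ-valued statistic `W` of a uniformly
random permutation of `[n]` and the Poisson(lam) distribution. -/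
def dTVNatUnif {n : ℕ} (W : Equiv.Perm (Fin n) → ℕ) (lam : ℝ) : ℝ :=
  (1 / 2) * ∑' k : ℕ, |unifProb {σ | W σ = k} - poissonPMF lam k|

/-- Total variation distance between the law of the ℕ-valued statistic `W` of a Mallows(q)
random permutation of `[n]` and the Poisson(lam) distribution. -/
def dTVNatMallows {n : ℕ} (q : ℝ) (W : Equiv.Perm (Fin n) → ℕ) (lam : ℝ) : ℝ :=
  (1 / 2) * ∑' k : ℕ, |mallowsProb q {σ | W σ = k} - poissonPMF lam k|

/-- Total variation distance between the joint law of the indicator family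
`(X_α)_{α ∈ I}` of a uniformly random permutation of `[n]` and the joint law of
independent Bernoulli random variables with marginals `p`. -/
def dTVFamUnif {n : ℕ} {I : Type*} [Fintype I] [DecidableEq I]
    (X : Equiv.Perm (Fin n) → I → Prop) (p : I → ℝ) : ℝ :=
  (1 / 2) * ∑ x : I → Bool,
    |unifProb {σ | ∀ α, X σ α ↔ x α = true} - ∏ α, (if x α then p α else 1 - p α)|

/-- Total variation distance between the joint law of the indicator family
`(X_α)_{α ∈ I}` of a Mallows(q) random permutation of `[n]` and the joint law of
independent Bernoulli random variables with marginals `p`. -/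
def dTVFamMallows {n : ℕ} (q : ℝ) {I : Type*} [Fintype I] [DecidableEq I]
    (X : Equiv.Perm (Fin n) → I → Prop) (p : I → ℝ) : ℝ :=
  (1 / 2) * ∑ x : I → Bool,
    |mallowsProb q {σ | ∀ α, X σ α ↔ x α = true} - ∏ α, (if x α then p α else 1 - p α)|


lemma perm_ext_lt {N : ℕ} (ρ ρ' : Equiv.Perm (Fin N))
    (h : ∀ a b, ρ a < ρ b ↔ ρ' a < ρ' b) : ρ = ρ' := by
  have h1 : StrictMono (fun x => ρ' (ρ.symm x)) := by
    intro x y hxy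
    simp only
    rw [← h]; simpa using hxy
  have h2 : (fun x => ρ' (ρ.symm x)) = id := by
    apply (StrictMono.range_inj h1 strictMono_id).1
    have : Function.Surjective (fun x => ρ' (ρ.symm x)) := ρ'.surjective.comp ρ.symm.surjective
    rw [this.range_eq]; simp
  ext a
  have := congrFun h2 (ρ a)
  simp at this
  rw [this]

lemma exists_std {N : ℕ} {X : Type*} [LinearOrder X] (key : Fin N → X)
    (hk : Function.Injective key) :
    ∃ ρ : Equiv.Perm (Fin N), ∀ a b, ρ a < ρ b ↔ key a < key b := by
  have hc : (Finset.univ.image key).card = N := by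
    rw [Finset.card_image_of_injective _ hk]; simp
  let o := (Finset.univ.image key).orderIsoOfFin hc
  let f : Fin N → Fin N := fun a => o.symm ⟨key a, by simp⟩
  have hf : Function.Injective f := by
    intro a b hab
    have := o.symm.injective hab
    simp at this
    exact hk this
  refine ⟨Equiv.ofBijective f (Finite.injective_iff_bijective.1 hf), fun a b => ?_⟩
  simp [f]

/-- pattern of `σ` on `e`. -/
def patt {n N : ℕ} (σ : Equiv.Perm (Fin n)) (e : Fin N ↪o Fin n) : Equiv.Perm (Fin N) :=
  (exists_std (fun a => σ (e a)) (σ.injective.comp e.injective)).choose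

lemma patt_lt {n N : ℕ} (σ : Equiv.Perm (Fin n)) (e : Fin N ↪o Fin n) (a b : Fin N) :
    patt σ e a < patt σ e b ↔ σ (e a) < σ (e b) :=
  (exists_std (fun a => σ (e a)) (σ.injective.comp e.injective)).choose_spec a b

lemma patt_eq {n N : ℕ} (σ : Equiv.Perm (Fin n)) (e : Fin N ↪o Fin n) (ρ : Equiv.Perm (Fin N))
    (h : ∀ a b, σ (e a) < σ (e b) ↔ ρ a < ρ b) : patt σ e = ρ :=
  perm_ext_lt _ _ (fun a b => (patt_lt σ e a b).trans (h a b))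

/-- fibres of the pattern map -/
lemma patt_fiber {n N : ℕ} (e : Fin N ↪o Fin n) (ρ : Equiv.Perm (Fin N)) :
    (Finset.univ.filter fun σ : Equiv.Perm (Fin n) => patt σ e = ρ).card * N.factorial
      = n.factorial := by
  have hext : ∀ π : Equiv.Perm (Fin N), ∃ π' : Equiv.Perm (Fin n), ∀ a, π' (e a) = e (π a) := by
    intro π
    refine ⟨π.extendDomain (Equiv.ofInjective e e.injective), fun a => ?_⟩
    have := Equiv.Perm.extendDomain_apply_image π (Equiv.ofInjective e e.injective) a
    simpa using this
  have heq : ∀ ρ ρ' : Equiv.Perm (Fin N),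
      (Finset.univ.filter fun σ : Equiv.Perm (Fin n) => patt σ e = ρ).card ≤
      (Finset.univ.filter fun σ : Equiv.Perm (Fin n) => patt σ e = ρ').card := by
    intro ρ ρ'
    obtain ⟨π', hπ'⟩ := hext (ρ⁻¹ * ρ')
    apply Finset.card_le_card_of_injOn (fun σ => σ * π')
    · intro σ hσ
      simp only [Finset.coe_filter, Finset.mem_univ, true_and, Set.mem_ofPred_eq] at hσ ⊢
      apply patt_eq
      intro a b
      simp only [Equiv.Perm.mul_apply, hπ']
      rw [← patt_lt, hσ]
      simp
    · intro σ _ σ' _ h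
      simpa using h
  have hsum : ∑ ρ' : Equiv.Perm (Fin N),
      (Finset.univ.filter fun σ : Equiv.Perm (Fin n) => patt σ e = ρ').card = n.factorial := by
    rw [← Finset.card_eq_sum_card_fiberwise (f := fun σ => patt σ e)]
    · simp [Fintype.card_perm]
    · intro x _; simp
  rw [← hsum, Finset.sum_congr rfl (fun ρ' _ => le_antisymm (heq ρ' ρ) (heq ρ ρ'))]
  simp [Fintype.card_perm, mul_comm]

lemma occursOn_iff {m n : ℕ} (τ : Equiv.Perm (Fin m)) (σ : Equiv.Perm (Fin n))
    (α : Finset (Fin n)) : OccursOn τ σ α ↔ ∃ h : α.card = m, patt σ (α.orderEmbOfFin h) = τ := by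
  constructor
  · rintro ⟨f, hf, himg, h⟩
    have hc : α.card = m := by
      rw [← himg, Finset.card_image_of_injective _ hf.injective]; simp
    refine ⟨hc, ?_⟩
    have hfe : f = α.orderEmbOfFin hc := by
      apply Finset.orderEmbOfFin_unique
      · intro x; rw [← himg]; simp
      · exact hf
    apply patt_eq
    intro a b
    rw [← hfe]; exact h a b
  · rintro ⟨hc, h⟩
    refine ⟨α.orderEmbOfFin hc, (α.orderEmbOfFin hc).strictMono, ?_, ?_⟩
    · apply Finset.coe_injective
      simp
    · intro k l
      rw [← patt_lt, h]

lemma OccursOn.card {m n : ℕ} {τ : Equiv.Perm (Fin m)} {σ : Equiv.Perm (Fin n)}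
    {α : Finset (Fin n)} (h : OccursOn τ σ α) : α.card = m := ((occursOn_iff _ _ _).1 h).1

lemma occ_card {n j : ℕ} (τ : Equiv.Perm (Fin j)) (α : Finset (Fin n)) (h : α.card = j) :
    (Finset.univ.filter fun σ : Equiv.Perm (Fin n) => OccursOn τ σ α).card * j.factorial
      = n.factorial := by
  rw [← patt_fiber (α.orderEmbOfFin h) τ]
  congr 2
  ext σ
  simp [occursOn_iff, h]

/-- total number of occurrences -/
lemma sum_occ {n j : ℕ} (τ : Equiv.Perm (Fin j)) :
    (∑ σ : Equiv.Perm (Fin n), (Finset.univ.filter fun α : Finset (Fin n) =>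
        α.card = j ∧ OccursOn τ σ α).card) * j.factorial = n.choose j * n.factorial := by
  have h1 : ∀ σ : Equiv.Perm (Fin n), (Finset.univ.filter fun α : Finset (Fin n) =>
        α.card = j ∧ OccursOn τ σ α).card =
        ∑ α ∈ Finset.powersetCard j (Finset.univ : Finset (Fin n)),
          if OccursOn τ σ α then 1 else 0 := by
    intro σ
    rw [← Finset.card_filter]
    congr 1
    ext α
    simp [Finset.mem_powersetCard]
  simp only [h1]
  rw [Finset.sum_comm, Finset.sum_mul]
  rw [Finset.sum_congr rfl (g := fun _ => n.factorial)]
  · simp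
  · intro α hα
    rw [← Finset.card_filter]
    exact occ_card τ α (Finset.mem_powersetCard.1 hα).2

/-- Isolated occurrences. -/
def Iso {j N : ℕ} (τ : Equiv.Perm (Fin j)) (ρ : Equiv.Perm (Fin N)) (A : Finset (Fin N)) : Prop :=
  OccursOn τ ρ A ∧ (∃ B, B ≠ A ∧ OccursOn τ ρ B) ∧
    ∀ B, B ≠ A → OccursOn τ ρ B → A ∪ B = Finset.univ

lemma occursOn_patt {j n N : ℕ} (τ : Equiv.Perm (Fin j)) (σ : Equiv.Perm (Fin n))
    (e : Fin N ↪o Fin n) (A : Finset (Fin N)) :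
    OccursOn τ (patt σ e) A ↔ OccursOn τ σ (A.map e.toEmbedding) := by
  constructor
  · rintro ⟨f, hf, himg, h⟩
    refine ⟨e ∘ f, e.strictMono.comp hf, ?_, ?_⟩
    · rw [← himg]; ext x; simp
    · intro k l
      rw [← h, patt_lt]; rfl
  · rintro ⟨f, hf, himg, h⟩
    have : ∀ x, ∃ y ∈ A, e y = f x := by
      intro x
      have : f x ∈ A.map e.toEmbedding := by rw [← himg]; simp
      simpa using this
    choose g hg hge using this
    refine ⟨g, ?_, ?_, ?_⟩
    · intro x y hxy
      rw [← e.lt_iff_lt, hge, hge]; exact hf hxy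
    · ext x
      simp only [Finset.mem_image, Finset.mem_univ, true_and]
      constructor
      · rintro ⟨a, rfl⟩; exact hg a
      · intro hx
        have : e x ∈ A.map e.toEmbedding := by simpa using hx
        rw [← himg] at this
        simp only [Finset.mem_image, Finset.mem_univ, true_and] at this
        obtain ⟨a, ha⟩ := this
        exact ⟨a, e.injective (by rw [hge, ha])⟩
    · intro k l
      rw [patt_lt, hge, hge, h]


/-- total number of isolated occurrences -/
def isoTot {j : ℕ} (τ : Equiv.Perm (Fin j)) (k : ℕ) : ℕ :=
  ∑ ρ : Equiv.Perm (Fin (j + k)), (Finset.univ.filter fun A => Iso τ ρ A).card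

lemma exists_iso {n j : ℕ} (τ : Equiv.Perm (Fin j)) (σ : Equiv.Perm (Fin n)) (A : Finset (Fin n))
    (hA : OccursOn τ σ A) (hB : ∃ B, B ≠ A ∧ OccursOn τ σ B) :
    ∃ k ∈ Finset.Icc 1 (n - j), ∃ e : Fin (j + k) ↪o Fin n, ∃ A' : Finset (Fin (j + k)),
      A'.map e.toEmbedding = A ∧ Iso τ (patt σ e) A' := by
  have hex : ∃ d, ∃ B, B ≠ A ∧ OccursOn τ σ B ∧ (B \ A).card = d := by
    obtain ⟨B, h1, h2⟩ := hB; exact ⟨_, B, h1, h2, rfl⟩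
  obtain ⟨B, hBA, hBo, hd⟩ := Nat.find_spec hex
  have hmin : ∀ C, C ≠ A → OccursOn τ σ C → (B \ A).card ≤ (C \ A).card := by
    intro C h1 h2
    rw [hd]
    exact Nat.find_min' hex ⟨C, h1, h2, rfl⟩
  set k := (B \ A).card with hk
  have hV : (A ∪ B).card = j + k := by
    rw [← Finset.union_sdiff_self_eq_union, Finset.card_union_of_disjoint Finset.disjoint_sdiff,
      hA.card]
  have hk1 : 1 ≤ k := by
    by_contra hcon
    have h0 : B \ A = ∅ := by rw [← Finset.card_eq_zero]; omega
    have : B ⊆ A := Finset.sdiff_eq_empty_iff_subset.1 h0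
    exact hBA (Finset.eq_of_subset_of_card_le this (by rw [hA.card, hBo.card]))
  have hkn : j + k ≤ n := by
    rw [← hV]; simpa using Finset.card_le_univ (A ∪ B)
  let e := (A ∪ B).orderEmbOfFin hV
  have hpre : ∀ C : Finset (Fin n), C ⊆ A ∪ B →
      ∃ C' : Finset (Fin (j + k)), C'.map e.toEmbedding = C := by
    intro C hC
    refine ⟨Finset.univ.filter fun x => e x ∈ C, ?_⟩
    ext x
    simp only [Finset.mem_map, Finset.mem_filter, Finset.mem_univ, true_and]
    constructor
    · rintro ⟨a, ha, rfl⟩; exact ha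
    · intro hx
      have : x ∈ Set.range e := by
        rw [Finset.range_orderEmbOfFin]; exact hC hx
      obtain ⟨y, rfl⟩ := this
      exact ⟨y, hx, rfl⟩
  obtain ⟨A', hA'⟩ := hpre A Finset.subset_union_left
  obtain ⟨B', hB'⟩ := hpre B Finset.subset_union_right
  refine ⟨k, Finset.mem_Icc.2 ⟨hk1, by omega⟩, e, A', hA', ?_, ⟨B', ?_, ?_⟩, ?_⟩
  · rw [occursOn_patt, hA']; exact hA
  · rintro rfl; exact hBA (hB'.symm.trans hA')
  · rw [occursOn_patt, hB']; exact hBo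
  · intro C' hC' hCo
    rw [occursOn_patt] at hCo
    have hCA : C'.map e.toEmbedding ≠ A := by
      rw [← hA']
      intro h
      exact hC' (Finset.map_injective _ h)
    have h1 := hmin _ hCA hCo
    rw [← Finset.card_eq_iff_eq_univ]
    apply le_antisymm (by simpa using Finset.card_le_univ (A' ∪ C'))
    have h2 : ((A' ∪ C').map e.toEmbedding).card = (A' ∪ C').card := Finset.card_map _
    rw [← h2, Finset.map_union, hA', ← Finset.union_sdiff_self_eq_union,
      Finset.card_union_of_disjoint Finset.disjoint_sdiff, hA.card]
    simpa using h1

instance ordEmbFinite (N n : ℕ) : Finite (Fin N ↪o Fin n) :=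
  Finite.of_injective (fun e => (e : Fin N → Fin n)) DFunLike.coe_injective

lemma card_ordEmb (N n : ℕ) : Nat.card (Fin N ↪o Fin n) ≤ n.choose N := by
  have : n.choose N = Nat.card {s : Finset (Fin n) // s.card = N} := by
    simp
  rw [this]
  apply Nat.card_le_card_of_injective
    (fun e : Fin N ↪o Fin n => (⟨Finset.univ.map e.toEmbedding, by simp⟩ :
      {s : Finset (Fin n) // s.card = N}))
  intro e e' h
  simp only [Subtype.mk.injEq] at h
  have h' := congrArg (fun s : Finset (Fin n) => (s : Set (Fin n))) h
  simp only [Finset.coe_map, Finset.coe_univ, Set.image_univ] at h'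
  apply DFunLike.coe_injective
  exact (StrictMono.range_inj e.strictMono e'.strictMono).1 h'

lemma card_emb_iso {n j k : ℕ} (τ : Equiv.Perm (Fin j)) (e : Fin (j + k) ↪o Fin n) :
    (Finset.univ.filter fun p : Equiv.Perm (Fin n) × Finset (Fin (j + k)) =>
      Iso τ (patt p.1 e) p.2).card * (j + k).factorial = n.factorial * isoTot τ k := by
  have : (Finset.univ.filter fun p : Equiv.Perm (Fin n) × Finset (Fin (j + k)) =>
      Iso τ (patt p.1 e) p.2).card = ∑ ρ : Equiv.Perm (Fin (j + k)),
        (Finset.univ.filter fun σ : Equiv.Perm (Fin n) => patt σ e = ρ).card *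
          (Finset.univ.filter fun A => Iso τ ρ A).card := by
    rw [Finset.card_eq_sum_card_fiberwise (f := fun p => patt p.1 e) (t := Finset.univ)
      (by intro x _; simp)]
    apply Finset.sum_congr rfl
    intro ρ _
    rw [← Finset.card_product]
    congr 1
    ext ⟨σ, A⟩
    simp only [Finset.mem_filter, Finset.mem_univ, true_and, Finset.mem_product]
    constructor
    · rintro ⟨h1, h2⟩; exact ⟨h2, h2 ▸ h1⟩
    · rintro ⟨h1, h2⟩; exact ⟨h1 ▸ h2, h1⟩
  rw [this, Finset.sum_mul, isoTot, Finset.mul_sum]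
  apply Finset.sum_congr rfl
  intro ρ _
  rw [← patt_fiber e ρ]; ring

lemma iso_reduction {n j : ℕ} (τ : Equiv.Perm (Fin j)) (W : Equiv.Perm (Fin n) → ℕ)
    (hW : ∀ σ, W σ = (Finset.univ.filter fun α : Finset (Fin n) =>
        α.card = j ∧ OccursOn τ σ α).card) :
    ((∑ σ, if 2 ≤ W σ then W σ else 0 : ℕ) : ℝ) ≤ n.factorial * ∑ k ∈ Finset.Icc 1 (n - j),
      (n.choose (j + k) : ℝ) / ((j + k).factorial : ℝ) * (isoTot τ k : ℝ) := by
  let _ : ∀ N, Fintype (Fin N ↪o Fin n) := fun N => Fintype.ofFinite _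
  let S := Finset.univ.filter fun p : Equiv.Perm (Fin n) × Finset (Fin n) =>
    OccursOn τ p.1 p.2 ∧ ∃ B, B ≠ p.2 ∧ OccursOn τ p.1 B
  have hS : (∑ σ, if 2 ≤ W σ then W σ else 0) ≤ S.card := by
    rw [Finset.card_eq_sum_card_fiberwise (f := fun p => p.1) (t := Finset.univ)
      (by intro x _; simp)]
    apply Finset.sum_le_sum
    intro σ _
    split_ifs with h
    swap
    · exact Nat.zero_le _
    rw [hW σ]
    apply Finset.card_le_card_of_injOn (fun A => (σ, A))
    · intro A hA
      simp only [Finset.coe_filter, Finset.mem_univ, true_and, Set.mem_ofPred_eq] at hA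
      rw [hW σ] at h
      obtain ⟨B, hB, hBA⟩ := Finset.exists_mem_ne (lt_of_lt_of_le one_lt_two h) A
      simp only [Finset.mem_filter, Finset.mem_univ, true_and] at hB
      simp only [S, Finset.coe_filter, Finset.mem_filter, Finset.mem_univ, true_and,
        Set.mem_ofPred_eq, and_true]
      exact ⟨hA.2, B, hBA, hB.2⟩
    · intro A _ A' _ h
      simpa using h
  let U : ∀ k, (Fin (j + k) ↪o Fin n) → Finset (Equiv.Perm (Fin n) × Finset (Fin n)) :=
    fun k e => (Finset.univ.filter fun p : Equiv.Perm (Fin n) × Finset (Fin (j + k)) =>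
      Iso τ (patt p.1 e) p.2).image (fun p => (p.1, p.2.map e.toEmbedding))
  have hSU : S ⊆ (Finset.Icc 1 (n - j)).biUnion fun k => Finset.univ.biUnion (U k) := by
    rintro ⟨σ, A⟩ hp
    simp only [S, Finset.mem_filter, Finset.mem_univ, true_and] at hp
    obtain ⟨k, hk, e, A', hA', hI⟩ := exists_iso τ σ A hp.1 hp.2
    simp only [Finset.mem_biUnion]
    refine ⟨k, hk, e, Finset.mem_univ _, ?_⟩
    simp only [U, Finset.mem_image, Finset.mem_filter, Finset.mem_univ, true_and]
    exact ⟨(σ, A'), hI, by simp [hA']⟩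
  have hc : S.card ≤ ∑ k ∈ Finset.Icc 1 (n - j), ∑ e : Fin (j + k) ↪o Fin n, (U k e).card :=
    (Finset.card_le_card hSU).trans (Finset.card_biUnion_le.trans
      (Finset.sum_le_sum fun k _ => Finset.card_biUnion_le))
  have hU : ∀ k e, ((U k e).card : ℝ) ≤ n.factorial * isoTot τ k / (j + k).factorial := by
    intro k e
    rw [le_div_iff₀ (by positivity)]
    have h1 : (U k e).card * (j + k).factorial ≤ n.factorial * isoTot τ k := by
      rw [← card_emb_iso τ e]
      exact Nat.mul_le_mul_right _ Finset.card_image_le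
    exact_mod_cast h1
  calc ((∑ σ, if 2 ≤ W σ then W σ else 0 : ℕ) : ℝ) ≤ (S.card : ℝ) := by exact_mod_cast hS
    _ ≤ ∑ k ∈ Finset.Icc 1 (n - j), ∑ e : Fin (j + k) ↪o Fin n, ((U k e).card : ℝ) := by
        exact_mod_cast hc
    _ ≤ ∑ k ∈ Finset.Icc 1 (n - j), ∑ e : Fin (j + k) ↪o Fin n,
        (n.factorial * isoTot τ k / (j + k).factorial : ℝ) :=
        Finset.sum_le_sum fun k _ => Finset.sum_le_sum fun e _ => hU k e
    _ ≤ _ := by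
        rw [Finset.mul_sum]
        apply Finset.sum_le_sum
        intro k _
        rw [Finset.sum_const, nsmul_eq_mul, Finset.card_univ]
        have h1 : (Fintype.card (Fin (j + k) ↪o Fin n) : ℝ) ≤ n.choose (j + k) := by
          have := card_ordEmb (j + k) n
          rw [Nat.card_eq_fintype_card] at this
          exact_mod_cast this
        calc _ ≤ (n.choose (j + k) : ℝ) * (n.factorial * isoTot τ k / (j + k).factorial : ℝ) := by
              gcongr
          _ = _ := by ring


section disp
variable {j N : ℕ} {a : Fin j → Fin N} (ha : StrictMono a)

include ha
lemma disp_le (t : Fin j) : (t : ℕ) ≤ a t := by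
  have : ((Finset.Iio t).image a).card ≤ (Finset.Iio (a t)).card := by
    apply Finset.card_le_card
    intro x hx
    simp only [Finset.mem_image, Finset.mem_Iio] at hx ⊢
    obtain ⟨s, hs, rfl⟩ := hx
    exact ha hs
  rw [Finset.card_image_of_injective _ ha.injective] at this
  simpa using this

lemma disp_ub (t : Fin j) : (a t : ℕ) + j ≤ N + t := by
  have : ((Finset.Ioi t).image a).card ≤ (Finset.Ioi (a t)).card := by
    apply Finset.card_le_card
    intro x hx
    simp only [Finset.mem_image, Finset.mem_Ioi] at hx ⊢
    obtain ⟨s, hs, rfl⟩ := hx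
    exact ha hs
  rw [Finset.card_image_of_injective _ ha.injective] at this
  simp only [Fin.card_Ioi] at this
  have := t.2; have := (a t).2
  omega

lemma disp_mono {s t : Fin j} (h : s ≤ t) : (a s : ℕ) + t ≤ a t + s := by
  have : ((Finset.Ioc s t).image a).card ≤ (Finset.Ioc (a s) (a t)).card := by
    apply Finset.card_le_card
    intro x hx
    simp only [Finset.mem_image, Finset.mem_Ioc] at hx ⊢
    obtain ⟨r, hr, rfl⟩ := hx
    exact ⟨ha hr.1, ha.monotone hr.2⟩
  rw [Finset.card_image_of_injective _ ha.injective] at this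
  simp only [Fin.card_Ioc] at this
  have h1 : (a s : ℕ) ≤ a t := ha.monotone h
  have h2 : (s : ℕ) ≤ t := h
  omega

/-- if `a t = t` then everything below is in the range -/
lemma disp_zero_mem {t : Fin j} (h : (a t : ℕ) = t) (p : Fin N) (hp : p < a t) :
    p ∈ Set.range a := by
  have hp' : (p : ℕ) < t := by have : (p : ℕ) < a t := hp; omega
  refine ⟨⟨p, by omega⟩, ?_⟩
  have h1 := disp_le ha ⟨p, by omega⟩
  have h2 := disp_mono ha (s := ⟨p, by omega⟩) (t := t) (by rw [Fin.le_def]; simp; omega)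
  apply Fin.ext
  simp only at h1 h2
  omega

lemma disp_zero_of_mem {t : Fin j} (h : ∀ p < a t, p ∈ Set.range a) : (a t : ℕ) = t := by
  apply le_antisymm _ (disp_le ha t)
  have : (Finset.Iio (a t)).card ≤ ((Finset.Iio t).image a).card := by
    apply Finset.card_le_card
    intro x hx
    simp only [Finset.mem_image, Finset.mem_Iio] at hx ⊢
    obtain ⟨s, rfl⟩ := h x hx
    exact ⟨s, ha.lt_iff_lt.1 hx, rfl⟩
  rw [Finset.card_image_of_injective _ ha.injective] at this
  simpa using this

lemma disp_pos {b : Fin j → Fin N} (hb : StrictMono b)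
    (hU : ∀ p, p ∈ Set.range a ∨ p ∈ Set.range b) (t : Fin j) (x : ℕ)
    (hx : (Finset.univ.filter fun s => s < t ∧ a s ∉ Set.range b).card = x)
    (hm : (a t : ℕ) = t + x ∨ (a t : ℕ) = t + (x + 1)) (hat : a t ∉ Set.range b) :
    (∀ r, r < t → b r < a t) ∧ (∀ r, t < r → a t < b r) := by
  have hcount : (Finset.Iio (a t)).card =
      (Finset.univ.filter fun r => b r < a t).card + x := by
    rw [← hx, ← Finset.card_image_of_injective (Finset.univ.filter fun r => b r < a t) hb.injective,
      ← Finset.card_image_of_injective (Finset.univ.filter fun s => s < t ∧ a s ∉ Set.range b)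
        ha.injective, ← Finset.card_union_of_disjoint]
    · congr 1
      ext p
      simp only [Finset.mem_Iio, Finset.mem_union, Finset.mem_image, Finset.mem_filter,
        Finset.mem_univ, true_and]
      constructor
      · intro hp
        by_cases hpb : p ∈ Set.range b
        · obtain ⟨r, rfl⟩ := hpb
          exact Or.inl ⟨r, hp, rfl⟩
        · obtain ⟨s, rfl⟩ := (hU p).resolve_right hpb
          exact Or.inr ⟨s, ⟨ha.lt_iff_lt.1 hp, hpb⟩, rfl⟩
      · rintro (⟨r, hr, rfl⟩ | ⟨s, hs, rfl⟩)
        · exact hr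
        · exact ha hs.1
    · rw [Finset.disjoint_left]
      intro p hp hp'
      simp only [Finset.mem_image, Finset.mem_filter, Finset.mem_univ, true_and] at hp hp'
      obtain ⟨r, hr, rfl⟩ := hp
      obtain ⟨s, hs, hs'⟩ := hp'
      exact hs.2 ⟨r, hs'.symm⟩
  rw [Fin.card_Iio] at hcount
  constructor
  · intro r hr
    by_contra hcon
    have : (Finset.univ.filter fun r => b r < a t) ⊆ Finset.Iio r := by
      intro r' hr'
      simp only [Finset.mem_filter, Finset.mem_univ, true_and, Finset.mem_Iio] at hr' ⊢
      exact hb.lt_iff_lt.1 (lt_of_lt_of_le hr' (not_lt.1 hcon))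
    have := Finset.card_le_card this
    rw [Fin.card_Iio] at this
    have : (r : ℕ) < t := hr
    omega
  · intro r hr
    by_contra hcon
    have hne : b r ≠ a t := fun h => hat ⟨r, h⟩
    have hlt : b r < a t := lt_of_le_of_ne (not_lt.1 hcon) hne
    have : Finset.Iic r ⊆ (Finset.univ.filter fun r => b r < a t) := by
      intro r' hr'
      simp only [Finset.mem_filter, Finset.mem_univ, true_and, Finset.mem_Iic] at hr' ⊢
      exact lt_of_le_of_lt (hb.monotone hr') hlt
    have := Finset.card_le_card this
    rw [Fin.card_Iic] at this
    have : (t : ℕ) < r := hr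
    omega

end disp

lemma orderEmb_rank {α : Type*} [LinearOrder α] [Fintype α] (T : Finset α) {k : ℕ}
    (hT : T.card = k) (x : Fin k) :
    (Finset.univ.filter fun s => s < T.orderEmbOfFin hT x ∧ s ∈ T).card = (x : ℕ) := by
  rw [← Fin.card_Iio x, ← Finset.card_map (T.orderEmbOfFin hT).toEmbedding]
  congr 1
  ext s
  simp only [Finset.mem_filter, Finset.mem_univ, true_and, Finset.mem_map, Finset.mem_Iio]
  constructor
  · rintro ⟨h1, h2⟩
    have : s ∈ Set.range (T.orderEmbOfFin hT) := by
      rw [Finset.range_orderEmbOfFin]; exact h2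
    obtain ⟨y, rfl⟩ := this
    exact ⟨y, (T.orderEmbOfFin hT).lt_iff_lt.1 h1, rfl⟩
  · rintro ⟨y, hy, rfl⟩
    exact ⟨(T.orderEmbOfFin hT).strictMono hy, Finset.orderEmbOfFin_mem _ _ _⟩

/-- a mark -/
def Mark {k : ℕ} (f : Fin k → Fin (k + 1)) (x : Fin k) : Prop :=
  (f x : ℕ) = x ∨ (f x : ℕ) = x + 1

/-- valid codes -/
def Valid {j k : ℕ} (τ : Equiv.Perm (Fin j)) (T : Finset (Fin j)) (hT : T.card = k)
    (f g : Fin k → Fin (k + 1)) : Prop :=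
  Monotone f ∧ Monotone g ∧ (2 ≤ k → ∀ x y,
    (T.map τ.toEmbedding).orderEmbOfFin ((Finset.card_map _).trans hT) y
      = τ (T.orderEmbOfFin hT x) → ¬ (Mark f x ∧ Mark g y))

/-- code relation -/
def HasCode {j k : ℕ} (τ : Equiv.Perm (Fin j)) (T : Finset (Fin j)) (hT : T.card = k)
    (f g : Fin k → Fin (k + 1)) (ρ : Equiv.Perm (Fin (j + k))) (B : Finset (Fin (j + k))) : Prop :=
  ∃ a b : Fin j → Fin (j + k), OccursAt τ ρ a ∧ OccursAt τ ρ b ∧ Finset.univ.image b = B ∧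
    (∀ p, p ∈ Set.range a ∨ p ∈ Set.range b) ∧ (∀ t, t ∈ T ↔ a t ∉ Set.range b) ∧
    (∀ x, (a (T.orderEmbOfFin hT x) : ℕ) = T.orderEmbOfFin hT x + f x) ∧
    (∀ y, (ρ (a (τ.symm ((T.map τ.toEmbedding).orderEmbOfFin ((Finset.card_map _).trans hT) y))) : ℕ)
      = (T.map τ.toEmbedding).orderEmbOfFin ((Finset.card_map _).trans hT) y + g y)

lemma code_inj {j k : ℕ} {τ : Equiv.Perm (Fin j)} {T : Finset (Fin j)} {hT : T.card = k}
    {f g : Fin k → Fin (k + 1)} {ρ ρ' : Equiv.Perm (Fin (j + k))} {B B' : Finset (Fin (j + k))}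
    (h : HasCode τ T hT f g ρ B) (h' : HasCode τ T hT f g ρ' B') : ρ = ρ' ∧ B = B' := by
  obtain ⟨a, b, ha, hb, hB, hU, hTm, hf, hg⟩ := h
  obtain ⟨a', b', ha', hb', hB', hU', hTm', hf', hg'⟩ := h'
  have hpos : ∀ t ∈ T, a t = a' t := by
    intro t ht
    have : t ∈ Set.range (T.orderEmbOfFin hT) := by rw [Finset.range_orderEmbOfFin]; exact ht
    obtain ⟨x, rfl⟩ := this
    apply Fin.ext; rw [hf, hf']
  have hval : ∀ t ∈ T, ρ (a t) = ρ' (a' t) := by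
    intro t ht
    have : τ t ∈ Set.range ((T.map τ.toEmbedding).orderEmbOfFin ((Finset.card_map _).trans hT)) := by
      rw [Finset.range_orderEmbOfFin]; simpa using ht
    obtain ⟨y, hy⟩ := this
    have e : t = τ.symm ((T.map τ.toEmbedding).orderEmbOfFin ((Finset.card_map _).trans hT) y) := by
      rw [hy]; simp
    apply Fin.ext
    rw [e, hg, hg']
  have hcomp : ∀ p, p ∉ Set.range b ↔ ∃ t ∈ T, a t = p := by
    intro p
    constructor
    · intro hp
      obtain ⟨t, rfl⟩ := (hU p).resolve_right hp
      exact ⟨t, (hTm t).2 hp, rfl⟩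
    · rintro ⟨t, ht, rfl⟩; exact (hTm t).1 ht
  have hcomp' : ∀ p, p ∉ Set.range b' ↔ ∃ t ∈ T, a' t = p := by
    intro p
    constructor
    · intro hp
      obtain ⟨t, rfl⟩ := (hU' p).resolve_right hp
      exact ⟨t, (hTm' t).2 hp, rfl⟩
    · rintro ⟨t, ht, rfl⟩; exact (hTm' t).1 ht
  have hrange : Set.range b = Set.range b' := by
    ext p
    rw [← not_iff_not, hcomp, hcomp']
    constructor
    · rintro ⟨t, ht, rfl⟩; exact ⟨t, ht, (hpos t ht).symm⟩
    · rintro ⟨t, ht, rfl⟩; exact ⟨t, ht, hpos t ht⟩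
  have hbb : b = b' := (StrictMono.range_inj hb.1 hb'.1).1 hrange
  have hoff : ∀ p, p ∉ Set.range b → ρ p = ρ' p := by
    intro p hp
    obtain ⟨t, ht, rfl⟩ := (hcomp p).1 hp
    rw [hval t ht, hpos t ht]
  subst hbb
  refine ⟨?_, by rw [← hB, ← hB']⟩
  -- the values on B
  have hs : StrictMono (fun v => ρ (b (τ.symm v))) := by
    intro v w hvw
    simp only
    rw [hb.2]; simpa using hvw
  have hs' : StrictMono (fun v => ρ' (b (τ.symm v))) := by
    intro v w hvw
    simp only
    rw [hb'.2]; simpa using hvw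
  have hsub : ∀ (ρ ρ' : Equiv.Perm (Fin (j + k))), (∀ p, p ∉ Set.range b → ρ p = ρ' p) →
      Set.range (fun v => ρ (b (τ.symm v))) ⊆ Set.range (fun v => ρ' (b (τ.symm v))) := by
    intro ρ ρ' hoff q hq
    obtain ⟨v, rfl⟩ := hq
    simp only
    by_cases hm : ρ'.symm (ρ (b (τ.symm v))) ∈ Set.range b
    · obtain ⟨w, hw⟩ := hm
      refine ⟨τ w, ?_⟩
      simp [hw]
    · exfalso
      have h1 := hoff _ hm
      rw [Equiv.apply_symm_apply] at h1
      have h2 := ρ.injective h1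
      rw [h2] at hm
      exact hm ⟨_, rfl⟩
  have heq := (StrictMono.range_inj hs hs').1
    (Set.Subset.antisymm (hsub ρ ρ' hoff) (hsub ρ' ρ (fun p hp => (hoff p hp).symm)))
  ext p
  congr 1
  by_cases hp : p ∈ Set.range b
  · obtain ⟨w, rfl⟩ := hp
    have := congrFun heq (τ w)
    simpa using this
  · exact hoff p hp

lemma code_exists {j k : ℕ} (τ : Equiv.Perm (Fin j)) (ρ : Equiv.Perm (Fin (j + k)))
    {A B : Finset (Fin (j + k))} (hB : Iso τ ρ B) (hA : OccursOn τ ρ A) (hAB : A ≠ B) :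
    ∃ (T : Finset (Fin j)) (hT : T.card = k) (f g : Fin k → Fin (k + 1)),
      HasCode τ T hT f g ρ B ∧ Valid τ T hT f g ∧
      (∀ x : Fin k, (x : ℕ) = 0 → (f x : ℕ) = 0 → ∀ p ∉ A, ∃ q ∉ B, q ≤ p) ∧
      (∀ x : Fin k, (x : ℕ) = 0 → (f x : ℕ) ≠ 0 → ∃ p ∉ A, ∀ q ∉ B, p < q) := by
  obtain ⟨a, ham, haA, hao⟩ := hA
  obtain ⟨b, hbm, hbB, hbo⟩ := hB.1
  have hAr : ∀ p, p ∈ A ↔ p ∈ Set.range a := by intro p; rw [← haA]; simp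
  have hBr : ∀ p, p ∈ B ↔ p ∈ Set.range b := by intro p; rw [← hbB]; simp
  have hun := hB.2.2 A hAB ⟨a, ham, haA, hao⟩
  have hU : ∀ p, p ∈ Set.range a ∨ p ∈ Set.range b := by
    intro p
    have : p ∈ B ∪ A := by rw [hun]; simp
    rw [Finset.mem_union, hAr, hBr] at this
    exact this.symm
  let T : Finset (Fin j) := Finset.univ.filter fun t => a t ∉ Set.range b
  have hTm : ∀ t, t ∈ T ↔ a t ∉ Set.range b := by intro t; simp [T]
  have hT : T.card = k := by
    rw [← Finset.card_image_of_injective T ham.injective]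
    have : T.image a = Bᶜ := by
      ext p
      simp only [Finset.mem_image, hTm, Finset.mem_compl, hBr]
      constructor
      · rintro ⟨t, ht, rfl⟩; exact ht
      · intro hp
        obtain ⟨t, rfl⟩ := (hU p).resolve_right hp
        exact ⟨t, hp, rfl⟩
    rw [this, Finset.card_compl, hB.1.card]; simp
  let xs := T.orderEmbOfFin hT
  let hT' : (T.map τ.toEmbedding).card = k := (Finset.card_map _).trans hT
  let ys := (T.map τ.toEmbedding).orderEmbOfFin hT'
  let c : Fin j → Fin (j + k) := fun v => ρ (a (τ.symm v))
  let c' : Fin j → Fin (j + k) := fun v => ρ (b (τ.symm v))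
  have hc : StrictMono c := by
    intro v w hvw
    simp only [c]
    rw [hao]; simpa using hvw
  have hc' : StrictMono c' := by
    intro v w hvw
    simp only [c']
    rw [hbo]; simpa using hvw
  have hcr : ∀ v, c v ∈ Set.range c' ↔ a (τ.symm v) ∈ Set.range b := by
    intro v
    constructor
    · rintro ⟨w, hw⟩
      exact ⟨_, ρ.injective hw⟩
    · rintro ⟨w, hw⟩
      exact ⟨τ w, by simp [c, c', hw]⟩
  have hcU : ∀ p, p ∈ Set.range c ∨ p ∈ Set.range c' := by
    intro p
    rcases hU (ρ.symm p) with ⟨w, hw⟩ | ⟨w, hw⟩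
    · exact Or.inl ⟨τ w, by simp [c, hw]⟩
    · exact Or.inr ⟨τ w, by simp [c', hw]⟩
  let f : Fin k → Fin (k + 1) := fun x => ⟨(a (xs x) : ℕ) - xs x, by
    have h1 := disp_le ham (xs x)
    have h2 := disp_ub ham (xs x)
    omega⟩
  let g : Fin k → Fin (k + 1) := fun y => ⟨(c (ys y) : ℕ) - ys y, by
    have h1 := disp_le hc (ys y)
    have h2 := disp_ub hc (ys y)
    omega⟩
  have hf : ∀ x, (a (xs x) : ℕ) = xs x + f x := by
    intro x
    have h1 := disp_le ham (xs x)
    simp only [f]; omega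
  have hg : ∀ y, (c (ys y) : ℕ) = ys y + g y := by
    intro x
    have h1 := disp_le hc (ys x)
    simp only [g]; omega
  refine ⟨T, hT, f, g, ⟨a, b, ⟨ham, hao⟩, ⟨hbm, hbo⟩, hbB, hU, hTm, hf, hg⟩, ⟨?_, ?_, ?_⟩, ?_, ?_⟩
  · intro x x' hxx
    have h1 := disp_mono ham (xs.monotone hxx)
    rw [Fin.le_def]
    have h2 := hf x
    have h3 := hf x'
    omega
  · intro x x' hxx
    have h1 := disp_mono hc (ys.monotone hxx)
    rw [Fin.le_def]
    have h2 := hg x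
    have h3 := hg x'
    omega
  · rintro hk x y hxy ⟨hmf, hmg⟩
    change ys y = τ (xs x) at hxy
    have hxT : xs x ∈ T := Finset.orderEmbOfFin_mem _ _ _
    have hna : a (xs x) ∉ Set.range b := (hTm _).1 hxT
    have P := disp_pos ham hbm hU (xs x) x (by
      rw [← orderEmb_rank T hT x]
      congr 1
      ext s
      simp [hTm, xs]) (by
      have := hf x
      rcases hmf with h | h <;> omega) hna
    have hcxy : c (ys y) = ρ (a (xs x)) := by simp [c, hxy]
    have Q := disp_pos hc hc' hcU (ys y) y (by
      rw [← orderEmb_rank (T.map τ.toEmbedding) hT' y]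
      congr 1
      ext v
      simp only [Finset.mem_filter, Finset.mem_univ, true_and, ys, hcr, ← hTm]
      simp) (by
      have := hg y
      rcases hmg with h | h <;> omega) (by rw [hcr, hxy]; simpa using hna)
    rw [hcxy] at Q
    -- the new occurrence
    let b' := Function.update b (xs x) (a (xs x))
    have hb'1 : b' (xs x) = a (xs x) := Function.update_self ..
    have hb'2 : ∀ r, r ≠ xs x → b' r = b r := fun r hr => Function.update_of_ne hr ..
    have Q1 : ∀ r, τ r < τ (xs x) → ρ (b r) < ρ (a (xs x)) := by
      intro r hr
      have := Q.1 (τ r) (by rw [hxy]; exact hr)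
      simpa [c'] using this
    have Q2 : ∀ r, τ (xs x) < τ r → ρ (a (xs x)) < ρ (b r) := by
      intro r hr
      have := Q.2 (τ r) (by rw [hxy]; exact hr)
      simpa [c'] using this
    have hocc : OccursOn τ ρ (Finset.univ.image b') := by
      refine ⟨b', ?_, rfl, ?_⟩
      · intro r s hrs
        by_cases hr : r = xs x
        · have hs : s ≠ xs x := by rintro rfl; exact absurd hr hrs.ne
          rw [hr, hb'1, hb'2 s hs]
          exact P.2 s (hr ▸ hrs)
        · by_cases hs : s = xs x
          · rw [hs, hb'1, hb'2 r hr]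
            exact P.1 r (hs ▸ hrs)
          · rw [hb'2 r hr, hb'2 s hs]; exact hbm hrs
      · intro r s
        by_cases hr : r = xs x
        · by_cases hs : s = xs x
          · rw [hr, hs]; simp
          · rw [hr, hb'1, hb'2 s hs]
            constructor
            · intro h
              by_contra hcon
              have hlt : τ s < τ (xs x) :=
                lt_of_le_of_ne (not_lt.1 hcon) (fun h => hs (τ.injective h))
              exact absurd (Q1 s hlt) (not_lt.2 h.le)
            · exact Q2 s
        · by_cases hs : s = xs x
          · rw [hs, hb'1, hb'2 r hr]
            constructor
            · intro h
              by_contra hcon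
              have hlt : τ (xs x) < τ r :=
                lt_of_le_of_ne (not_lt.1 hcon) (fun h => hr (τ.injective h.symm))
              exact absurd (Q2 r hlt) (not_lt.2 h.le)
            · exact Q1 r
          · rw [hb'2 r hr, hb'2 s hs]; exact hbo r s
    have hne : Finset.univ.image b' ≠ B := by
      intro h
      apply hna
      rw [← hBr, ← h, ← hb'1]
      simp
    have hall := hB.2.2 _ hne hocc
    have hsub : (Finset.univ : Finset (Fin (j + k))) ⊆ insert (a (xs x)) B := by
      rw [← hall]
      intro p hp
      rw [Finset.mem_union] at hp
      rw [Finset.mem_insert]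
      rcases hp with hp | hp
      · exact Or.inr hp
      · simp only [Finset.mem_image, Finset.mem_univ, true_and] at hp
        obtain ⟨r, rfl⟩ := hp
        by_cases hr : r = xs x
        · left; rw [hr, hb'1]
        · right; rw [hb'2 r hr, hBr]; exact ⟨r, rfl⟩
    have h1 := Finset.card_le_card hsub
    have h2 := Finset.card_insert_le (a (xs x)) B
    rw [hB.1.card] at h2
    simp at h1
    omega
  · intro x hx hfx p hp
    have h0 : (a (xs x) : ℕ) = xs x := by rw [hf, hfx]; rfl
    refine ⟨a (xs x), ?_, ?_⟩
    · rw [hBr]; exact (hTm _).1 (Finset.orderEmbOfFin_mem _ _ _)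
    · by_contra hcon
      exact hp ((hAr p).2 (disp_zero_mem ham h0 p (not_le.1 hcon)))
  · intro x hx hfx
    by_contra hcon
    push Not at hcon
    apply hfx
    have h0 : (a (xs x) : ℕ) = xs x := by
      apply disp_zero_of_mem ham
      intro p hp
      rw [← hAr]
      by_contra hpA
      obtain ⟨q, hq, hqp⟩ := hcon p hpA
      rw [hBr] at hq
      obtain ⟨t, rfl⟩ := (hU q).resolve_right hq
      have ht : t ∈ Set.range xs := by
        rw [Finset.range_orderEmbOfFin]; exact (hTm t).2 hq
      obtain ⟨z, rfl⟩ := ht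
      have h1 : xs x ≤ xs z := xs.monotone (by rw [Fin.le_def]; omega)
      exact absurd (lt_of_le_of_lt hqp hp) (not_lt.2 (ham.monotone h1))
    have := hf x
    omega


/-- overlap count in shifted form -/
def Lc {j : ℕ} (τ : Equiv.Perm (Fin j)) (k : ℕ) : ℕ :=
  (Finset.univ.filter fun ρ : Equiv.Perm (Fin (j + k)) =>
    ∃ A B, OccursOn τ ρ A ∧ OccursOn τ ρ B ∧ A ∪ B = Finset.univ).card

/-- code pairs for a permutation -/
def codePairs (k : ℕ) (π : Equiv.Perm (Fin k)) :
    Finset ((Fin k → Fin (k + 1)) × (Fin k → Fin (k + 1))) :=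
  Finset.univ.filter fun p => Monotone p.1 ∧ Monotone p.2 ∧
    (2 ≤ k → ∀ x, ¬ (Mark p.1 x ∧ Mark p.2 (π x)))

/-- all codes -/
def codeSet {j : ℕ} (τ : Equiv.Perm (Fin j)) (k : ℕ) :
    Finset (Finset (Fin j) × (Fin k → Fin (k + 1)) × (Fin k → Fin (k + 1))) :=
  Finset.univ.filter fun p => ∃ hT : p.1.card = k, Valid τ p.1 hT p.2.1 p.2.2

lemma codeSet_card {j : ℕ} (τ : Equiv.Perm (Fin j)) (k V : ℕ)
    (hV : ∀ π, (codePairs k π).card ≤ V) : (codeSet τ k).card ≤ j.choose k * V := by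
  have h0 : j.choose k = (Finset.powersetCard k (Finset.univ : Finset (Fin j))).card := by simp
  rw [h0, mul_comm]
  apply Finset.card_le_mul_card_image_of_maps_to (f := fun p => p.1)
  · intro p hp
    simp only [codeSet, Finset.mem_filter, Finset.mem_univ, true_and] at hp
    obtain ⟨hT, -⟩ := hp
    simp [Finset.mem_powersetCard, hT]
  · intro T hT
    rw [Finset.mem_powersetCard] at hT
    have hT := hT.2
    let xs := T.orderEmbOfFin hT
    let hT' : (T.map τ.toEmbedding).card = k := (Finset.card_map _).trans hT
    let ys := (T.map τ.toEmbedding).orderEmbOfFin hT'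
    have hex : ∀ x, ∃ y, ys y = τ (xs x) := by
      intro x
      have : τ (xs x) ∈ Set.range ys := by
        rw [Finset.range_orderEmbOfFin]
        simp [xs]
      exact this
    choose π hπ using hex
    have hinj : Function.Injective π := by
      intro x x' h
      have := hπ x
      rw [h, hπ] at this
      exact (xs.injective (τ.injective this)).symm
    refine le_trans ?_ (hV (Equiv.ofBijective π (Finite.injective_iff_bijective.1 hinj)))
    apply Finset.card_le_card_of_injOn (fun p => p.2)
    · rintro ⟨T', f, g⟩ hp
      simp only [codeSet, Finset.coe_filter, Finset.mem_filter, Finset.mem_univ, true_and,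
        Set.mem_ofPred_eq] at hp
      obtain ⟨⟨hT1, h1, h2, h3⟩, rfl⟩ := hp
      simp only [codePairs, Finset.coe_filter, Finset.mem_univ, true_and, Set.mem_ofPred_eq]
      refine ⟨h1, h2, fun hk x => h3 hk x _ ?_⟩
      exact hπ x
    · rintro ⟨T1, p⟩ h1 ⟨T2, q⟩ h2 h
      simp only [codeSet, Finset.coe_filter, Finset.mem_filter, Finset.mem_univ, true_and,
        Set.mem_ofPred_eq] at h1 h2
      simp only at h
      rw [h1.2, h2.2, h]

lemma isoTot_bound {j : ℕ} (τ : Equiv.Perm (Fin j)) (k V : ℕ) (hk : 1 ≤ k)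
    (hV : ∀ π, (codePairs k π).card ≤ V) : 2 * isoTot τ k ≤ 2 * Lc τ k + j.choose k * V := by
  let S : Equiv.Perm (Fin (j + k)) → Finset (Finset (Fin (j + k))) := fun ρ =>
    Finset.univ.filter fun A => Iso τ ρ A
  let LP : Equiv.Perm (Fin (j + k)) → Finset (Fin (j + k)) → Prop := fun ρ B =>
    Iso τ ρ B ∧ ∃ A, OccursOn τ ρ A ∧ A ≠ B ∧ ∃ p ∉ A, ∀ q ∉ B, p < q
  let RP : Equiv.Perm (Fin (j + k)) → Finset (Fin (j + k)) → Prop := fun ρ B =>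
    Iso τ ρ B ∧ ∃ A, OccursOn τ ρ A ∧ A ≠ B ∧ ∀ p ∉ A, ∃ q ∉ B, q ≤ p
  have hne : ∀ (ρ : Equiv.Perm (Fin (j + k))) A, Iso τ ρ A → (Aᶜ).Nonempty := by
    intro ρ A hA
    rw [← Finset.card_pos, Finset.card_compl, hA.1.card]
    simp; omega
  let μ : Finset (Fin (j + k)) → ℕ := fun A => if h : (Aᶜ).Nonempty then ((Aᶜ).min' h : ℕ) else 0
  have hμ1 : ∀ A : Finset (Fin (j + k)), (Aᶜ).Nonempty → ∃ p ∉ A, (p : ℕ) = μ A := by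
    intro A h
    refine ⟨(Aᶜ).min' h, ?_, ?_⟩
    · have := Finset.min'_mem _ h
      rwa [Finset.mem_compl] at this
    · simp [μ, h]
  have hμ2 : ∀ A : Finset (Fin (j + k)), ∀ q ∉ A, μ A ≤ q := by
    intro A q hq
    have hq' : q ∈ Aᶜ := by simpa using hq
    have h : (Aᶜ).Nonempty := ⟨q, hq'⟩
    simp only [μ, h, dif_pos]
    exact Finset.min'_le _ _ hq'
  let ind : Equiv.Perm (Fin (j + k)) → ℕ := fun ρ =>
    if ∃ A B, OccursOn τ ρ A ∧ OccursOn τ ρ B ∧ A ∪ B = Finset.univ then 1 else 0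
  have hind : ∀ ρ, (S ρ).Nonempty → ind ρ = 1 := by
    rintro ρ ⟨A, hA⟩
    simp only [S, Finset.mem_filter, Finset.mem_univ, true_and] at hA
    obtain ⟨B, hB1, hB2⟩ := hA.2.1
    simp only [ind]
    rw [if_pos]
    exact ⟨A, B, hA.1, hB2, hA.2.2 B hB1 hB2⟩
  have hleft : ∀ ρ, (S ρ).card ≤ ind ρ + (Finset.univ.filter fun B => LP ρ B).card := by
    intro ρ
    by_cases hS : (S ρ).Nonempty
    swap
    · rw [Finset.not_nonempty_iff_eq_empty] at hS
      simp [hS]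
    rw [hind ρ hS]
    obtain ⟨B0, hB0, hmin⟩ := Finset.exists_min_image (S ρ) μ hS
    have hle : (S ρ).erase B0 ⊆ Finset.univ.filter fun B => LP ρ B := by
      intro B hB
      rw [Finset.mem_erase] at hB
      have hm := hmin B hB.2
      simp only [S, Finset.mem_filter, Finset.mem_univ, true_and] at hB0 hB ⊢
      refine ⟨hB.2, B0, hB0.1, hB.1.symm, ?_⟩
      obtain ⟨p, hp, hpm⟩ := hμ1 B0 (hne ρ B0 hB0)
      refine ⟨p, hp, fun q hq => ?_⟩
      have h1 := hμ2 B q hq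
      have h2 : p ≠ q := by
        rintro rfl
        have := hB0.2.2 B hB.1 hB.2.1
        have hu : p ∈ B0 ∪ B := by rw [this]; simp
        rw [Finset.mem_union] at hu
        tauto
      rw [Fin.lt_def]
      have h3 : (p : ℕ) ≠ q := fun h => h2 (Fin.ext h)
      omega
    have := Finset.card_le_card hle
    rw [Finset.card_erase_of_mem hB0] at this
    omega
  have hright : ∀ ρ, (S ρ).card ≤ ind ρ + (Finset.univ.filter fun B => RP ρ B).card := by
    intro ρ
    by_cases hS : (S ρ).Nonempty
    swap
    · rw [Finset.not_nonempty_iff_eq_empty] at hS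
      simp [hS]
    rw [hind ρ hS]
    obtain ⟨B0, hB0, hmin⟩ := Finset.exists_max_image (S ρ) μ hS
    have hle : (S ρ).erase B0 ⊆ Finset.univ.filter fun B => RP ρ B := by
      intro B hB
      rw [Finset.mem_erase] at hB
      have hm := hmin B hB.2
      simp only [S, Finset.mem_filter, Finset.mem_univ, true_and] at hB0 hB ⊢
      refine ⟨hB.2, B0, hB0.1, hB.1.symm, ?_⟩
      intro p hp
      obtain ⟨q, hq, hqm⟩ := hμ1 B (hne ρ B hB.2)
      refine ⟨q, hq, ?_⟩
      have h1 := hμ2 B0 p hp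
      rw [Fin.le_def]
      omega
    have := Finset.card_le_card hle
    rw [Finset.card_erase_of_mem hB0] at this
    omega
  have hcodes : (∑ ρ, (Finset.univ.filter fun B => LP ρ B).card) +
      (∑ ρ, (Finset.univ.filter fun B => RP ρ B).card) ≤ (codeSet τ k).card := by
    have x0 : Fin k := ⟨0, by omega⟩
    have hsum : ∀ Q : Equiv.Perm (Fin (j + k)) → Finset (Fin (j + k)) → Prop,
        ∑ ρ, (Finset.univ.filter fun B => Q ρ B).card =
        (Finset.univ.filter fun p : Equiv.Perm (Fin (j + k)) × Finset (Fin (j + k)) =>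
          Q p.1 p.2).card := by
      intro Q
      rw [Finset.card_filter, Fintype.sum_prod_type]
      exact Finset.sum_congr rfl fun ρ _ => Finset.card_filter _ _
    have hgen : ∀ (Q : Equiv.Perm (Fin (j + k)) → Finset (Fin (j + k)) → Prop)
        (R : (Fin k → Fin (k + 1)) → Prop),
        (∀ ρ B, Q ρ B → ∃ (T : Finset (Fin j)) (hT : T.card = k) (f g : Fin k → Fin (k + 1)),
          HasCode τ T hT f g ρ B ∧ Valid τ T hT f g ∧ R f) →
        ∑ ρ, (Finset.univ.filter fun B => Q ρ B).card ≤
          ((codeSet τ k).filter fun p => R p.2.1).card := by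
      intro Q R hQ
      rw [hsum]
      choose! T hT f g h1 h2 h3 using hQ
      apply Finset.card_le_card_of_injOn (fun p => (T p.1 p.2, f p.1 p.2, g p.1 p.2))
      · rintro ⟨ρ, B⟩ hp
        simp only [Finset.coe_filter, Finset.mem_univ, true_and, Set.mem_ofPred_eq] at hp
        simp only [codeSet, Finset.coe_filter, Finset.mem_filter, Finset.mem_univ, true_and,
          Set.mem_ofPred_eq]
        exact ⟨⟨hT ρ B hp, h2 ρ B hp⟩, h3 ρ B hp⟩
      · rintro ⟨ρ, B⟩ hp ⟨ρ', B'⟩ hp' heq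
        simp only [Finset.coe_filter, Finset.mem_univ, true_and, Set.mem_ofPred_eq] at hp hp'
        simp only [Prod.mk.injEq] at heq
        obtain ⟨e1, e2, e3⟩ := heq
        have c1 := h1 ρ B hp
        have c2 := h1 ρ' B' hp'
        rw [← e2, ← e3] at c2
        have c3 : HasCode τ (T ρ B) (hT ρ B hp) (f ρ B) (g ρ B) ρ' B' := by
          have : ∀ (T1 T2 : Finset (Fin j)) (e : T1 = T2) (h2 : T2.card = k) (h1 : T1.card = k)
            (f g : Fin k → Fin (k + 1)), HasCode τ T2 h2 f g ρ' B' → HasCode τ T1 h1 f g ρ' B' := by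
            intro T1 T2 e; subst e; intro _ _ f g h; exact h
          exact this _ _ e1 _ _ _ _ c2
        obtain ⟨r1, r2⟩ := code_inj c1 c3
        rw [r1, r2]
    rw [← Finset.card_filter_add_card_filter_not (s := codeSet τ k)
      (fun p => ∀ x : Fin k, (x : ℕ) = 0 → (p.2.1 x : ℕ) ≠ 0)]
    apply Nat.add_le_add
    · have key := hgen LP (fun f => ∀ x : Fin k, (x : ℕ) = 0 → (f x : ℕ) ≠ 0) ?_
      · convert key
      rintro ρ B ⟨hB, A, hA, hAB, p, hp, hpq⟩
      obtain ⟨T, hT, f, g, h1, h2, h3, h4⟩ := code_exists τ ρ hB hA hAB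
      refine ⟨T, hT, f, g, h1, h2, fun x hx hfx => ?_⟩
      obtain ⟨q, hq, hqp⟩ := h3 x hx hfx p hp
      exact absurd (hpq q hq) (not_lt.2 hqp)
    · have key := hgen RP (fun f => ¬ ∀ x : Fin k, (x : ℕ) = 0 → (f x : ℕ) ≠ 0) ?_
      · convert key
      rintro ρ B ⟨hB, A, hA, hAB, hpq⟩
      obtain ⟨T, hT, f, g, h1, h2, h3, h4⟩ := code_exists τ ρ hB hA hAB
      refine ⟨T, hT, f, g, h1, h2, fun hall => ?_⟩
      obtain ⟨p, hp, hpq'⟩ := h4 ⟨0, by omega⟩ rfl (hall ⟨0, by omega⟩ rfl)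
      obtain ⟨q, hq, hqp⟩ := hpq p hp
      exact absurd (hpq' q hq) (not_lt.2 hqp)
  have hL : ∑ ρ, ind ρ = Lc τ k := by
    rw [Lc, Finset.card_filter]
  have h1 : isoTot τ k ≤ Lc τ k + ∑ ρ, (Finset.univ.filter fun B => LP ρ B).card := by
    rw [← hL, ← Finset.sum_add_distrib]
    exact Finset.sum_le_sum fun ρ _ => hleft ρ
  have h2 : isoTot τ k ≤ Lc τ k + ∑ ρ, (Finset.univ.filter fun B => RP ρ B).card := by
    rw [← hL, ← Finset.sum_add_distrib]
    exact Finset.sum_le_sum fun ρ _ => hright ρ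
  have h3 := codeSet_card τ k V hV
  omega


/-- finite sums by recursion -/
@[reducible] def sumR : ℕ → (ℕ → ℕ) → ℕ
  | 0, _ => 0
  | n + 1, g => sumR n g + g n

lemma sumR_eq (n : ℕ) (g : ℕ → ℕ) : sumR n g = ∑ i ∈ Finset.range n, g i := by
  induction n with
  | zero => rfl
  | succ n ih => rw [Finset.sum_range_succ, ← ih]

/-- sum over weakly increasing lists -/
def monR (K : ℕ) : ℕ → ℕ → (List ℕ → ℕ) → ℕ
  | 0, _, F => F []
  | l + 1, lo, F => sumR (K + 1) (fun v => bif Nat.ble lo v then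
      monR K l v (fun L => F (v :: L)) else 0)

lemma monotone_cons_iff {K l : ℕ} (v : Fin (K + 1)) (f : Fin l → Fin (K + 1)) :
    Monotone (Fin.cons v f : Fin (l + 1) → Fin (K + 1)) ↔ Monotone f ∧ ∀ x, v ≤ f x := by
  constructor
  · intro h
    refine ⟨fun x y hxy => ?_, fun x => ?_⟩
    · have := h (Fin.succ_le_succ_iff.2 hxy)
      simpa using this
    · have := h (Fin.zero_le x.succ)
      simpa using this
  · rintro ⟨h1, h2⟩ x y hxy
    refine Fin.cases ?_ (fun x => ?_) x hxy
    · intro _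
      refine Fin.cases ?_ (fun y => ?_) y
      · simp
      · simpa using h2 y
    · refine Fin.cases ?_ (fun y => ?_) y
      · intro h; exact absurd h (by simp)
      · intro h
        simpa using h1 (Fin.succ_le_succ_iff.1 h)

lemma monR_eq (K l lo : ℕ) (F : List ℕ → ℕ) :
    (∑ f : Fin l → Fin (K + 1), if Monotone f ∧ ∀ x, lo ≤ (f x : ℕ) then
      F (List.ofFn fun x => (f x : ℕ)) else 0) = monR K l lo F := by
  induction l generalizing lo F with
  | zero =>
    simp [monR, Subsingleton.monotone]
  | succ l ih =>
    rw [monR, sumR_eq, Finset.sum_range, ← (Fin.consEquiv (fun _ => Fin (K + 1))).sum_comp,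
      Fintype.sum_prod_type]
    apply Finset.sum_congr rfl
    intro v _
    rw [← ih]
    by_cases hv : lo ≤ (v : ℕ)
    · have : Nat.ble lo v = true := by rw [Nat.ble_eq]; exact hv
      rw [this, cond_true]
      apply Finset.sum_congr rfl
      intro f _
      change (if Monotone (Fin.cons v f : Fin (l + 1) → Fin (K + 1)) ∧
        ∀ x, lo ≤ ((Fin.cons v f : Fin (l + 1) → Fin (K + 1)) x : ℕ) then
          F (List.ofFn fun x => ((Fin.cons v f : Fin (l + 1) → Fin (K + 1)) x : ℕ)) else 0) = _
      simp only [monotone_cons_iff, List.ofFn_succ, Fin.cons_zero,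
        Fin.cons_succ, Fin.forall_fin_succ]
      congr 1
      apply propext
      constructor
      · rintro ⟨⟨h1, h2⟩, -⟩; exact ⟨h1, h2⟩
      · rintro ⟨h1, h2⟩; exact ⟨⟨h1, h2⟩, hv, fun x => hv.trans (h2 x)⟩
    · have : Nat.ble lo v = false := by
        rw [← Bool.not_eq_true, Nat.ble_eq]; exact hv
      rw [this, cond_false]
      apply Finset.sum_eq_zero
      intro f _
      rw [if_neg]
      rintro ⟨-, h⟩
      exact hv (by simpa using h 0)

/-- mark test -/
def mkB (i v : ℕ) : Bool := Nat.beq v i || Nat.beq v (i + 1)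

/-- number of marks -/
def marks : ℕ → List ℕ → ℕ
  | _, [] => 0
  | i, v :: L => (bif mkB i v then 1 else 0) + marks (i + 1) L

/-- no forbidden marks -/
def clean : ℕ → List Bool → List ℕ → Bool
  | i, b :: X, v :: L => (bif b then !(mkB i v) else true) && clean (i + 1) X L
  | _, _, _ => true

/-- quantification over boolean lists -/
def allB : ℕ → (List Bool → Bool) → Bool
  | 0, P => P []
  | n + 1, P => allB n (fun X => P (false :: X)) && allB n (fun X => P (true :: X))

lemma allB_spec (n : ℕ) (P : List Bool → Bool) (h : allB n P = true) (f : Fin n → Bool) :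
    P (List.ofFn f) = true := by
  induction n generalizing P with
  | zero => simpa [allB] using h
  | succ n ih =>
    rw [allB, Bool.and_eq_true] at h
    rw [List.ofFn_succ]
    cases hf : f 0
    · exact ih _ h.1 (fun i => f i.succ)
    · exact ih _ h.2 (fun i => f i.succ)

lemma mkB_iff (i v : ℕ) : mkB i v = true ↔ v = i ∨ v = i + 1 := by
  simp [mkB]

lemma marks_eq (l i : ℕ) (f : Fin l → ℕ) :
    marks i (List.ofFn f) = ∑ x : Fin l, if f x = x + i ∨ f x = x + i + 1 then 1 else 0 := by
  induction l generalizing i with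
  | zero => simp [marks]
  | succ l ih =>
    rw [List.ofFn_succ, marks, Fin.sum_univ_succ, ih]
    congr 1
    · by_cases h : f 0 = i ∨ f 0 = i + 1
      · rw [(mkB_iff i (f 0)).2 h]; simp [h]
      · have : mkB i (f 0) = false := by rw [← Bool.not_eq_true, mkB_iff]; exact h
        rw [this]; simp [h]
    · apply Finset.sum_congr rfl
      intro x _
      have : ((x.succ : Fin (l + 1)) : ℕ) = x + 1 := rfl
      rw [this]
      have e : (x : ℕ) + 1 + i = x + (i + 1) := by ring
      rw [e]

lemma clean_eq (l i : ℕ) (X : Fin l → Bool) (f : Fin l → ℕ)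
    (h : ∀ x, X x = true → ¬ (f x = x + i ∨ f x = x + i + 1)) :
    clean i (List.ofFn X) (List.ofFn f) = true := by
  induction l generalizing i with
  | zero => simp [clean]
  | succ l ih =>
    rw [List.ofFn_succ, List.ofFn_succ, clean, Bool.and_eq_true]
    constructor
    · cases hX : X 0
      · rfl
      · have := h 0 hX
        have h2 : mkB i (f 0) = false := by
          rw [← Bool.not_eq_true, mkB_iff]; simpa using this
        rw [h2]; rfl
    · apply ih
      intro x hx
      have := h x.succ hx
      have e : ((x.succ : Fin (l + 1)) : ℕ) = x + 1 := rfl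
      rw [e] at this
      have e : (x : ℕ) + 1 + i = x + (i + 1) := by ring
      rwa [e] at this

/-- number of monotone functions avoiding marks in `X` -/
def zX (k : ℕ) (X : Finset (Fin k)) : ℕ :=
  (Finset.univ.filter fun g : Fin k → Fin (k + 1) => Monotone g ∧ ∀ y ∈ X, ¬ Mark g y).card

lemma zX_le (k : ℕ) (X : Finset (Fin k)) : zX k X ≤
    monR k k 0 (fun L => bif clean 0 (List.ofFn fun y => decide (y ∈ X)) L then 1 else 0) := by
  rw [← monR_eq, zX, Finset.card_filter]
  apply Finset.sum_le_sum
  intro g _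
  by_cases h : Monotone g ∧ ∀ y ∈ X, ¬ Mark g y
  · rw [if_pos h, if_pos ⟨h.1, fun x => Nat.zero_le _⟩]
    rw [clean_eq]
    · rfl
    · intro y hy
      have := h.2 y (by simpa using hy)
      simpa [Mark] using this
  · rw [if_neg h]; exact Nat.zero_le _

lemma codePairs_le (k : ℕ) (hk : 2 ≤ k) (π : Equiv.Perm (Fin k)) (z : ℕ → ℕ)
    (hz : ∀ X, zX k X ≤ z X.card) :
    (codePairs k π).card ≤ monR k k 0 (fun L => z (marks 0 L)) := by
  rw [← monR_eq, codePairs, Finset.card_filter, Fintype.sum_prod_type]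
  apply Finset.sum_le_sum
  intro f _
  by_cases hf : Monotone f
  · rw [if_pos ⟨hf, fun x => Nat.zero_le _⟩]
    let X : Finset (Fin k) := (Finset.univ.filter fun x => Mark f x).map π.toEmbedding
    have hX : X.card = marks 0 (List.ofFn fun x => (f x : ℕ)) := by
      rw [marks_eq, Finset.card_map, Finset.card_filter]
      apply Finset.sum_congr rfl
      intro x _
      congr 1
    rw [← hX]
    refine le_trans ?_ (hz X)
    rw [zX, Finset.card_filter]
    apply Finset.sum_le_sum
    intro g _
    split_ifs with h1 h2 h2
    · exact le_rfl
    · exfalso; apply h2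
      refine ⟨h1.2.1, fun y hy hm => ?_⟩
      simp only [X, Finset.mem_map, Finset.mem_filter, Finset.mem_univ, true_and] at hy
      obtain ⟨x, hx, rfl⟩ := hy
      exact h1.2.2 hk x ⟨hx, hm⟩
    · exact Nat.zero_le _
    · exact le_rfl
  · simp [hf]

lemma ofFn_count {k : ℕ} (X : Finset (Fin k)) :
    (List.ofFn fun y => decide (y ∈ X)).count true = X.card := by
  rw [List.count, List.countP_eq_length_filter, ← List.map_id (List.ofFn _)]
  have h : ∀ (l : ℕ) (b : Fin l → Bool), ((List.ofFn b).filter (· == true)).length =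
      ∑ x, if b x = true then 1 else 0 := by
    intro l
    induction l with
    | zero => intro b; simp
    | succ l ih =>
      intro b
      rw [List.ofFn_succ, Fin.sum_univ_succ, ← ih (fun x => b x.succ), List.filter_cons]
      cases hb : b 0 <;> simp [add_comm]
  rw [List.map_id, h]
  simp

/-- pruned count -/
def cntM (K : ℕ) : List Bool → ℕ → ℕ → ℕ
  | [], _, _ => 1
  | b :: X, i, lo => sumR (K + 1) (fun v => bif Nat.ble lo v then
      (bif (bif b then mkB i v else false) then 0 else cntM K X (i + 1) v) else 0)

lemma monR_zero (K l lo : ℕ) : monR K l lo (fun _ => 0) = 0 := by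
  rw [← monR_eq]; simp

lemma monR_clean (K : ℕ) (X : List Bool) (i lo : ℕ) :
    monR K X.length lo (fun L => bif clean i X L then 1 else 0) = cntM K X i lo := by
  induction X generalizing i lo with
  | nil => simp [monR, cntM, clean]
  | cons b X ih =>
    rw [List.length_cons, monR, cntM]
    congr 1
    funext v
    congr 1
    rw [← ih]
    simp only [clean]
    cases b
    · simp
    · cases h : mkB i v
      · simp
      · simp [monR_zero]

/-- the check -/
def chk (k : ℕ) (z : ℕ → ℕ) : Bool :=
  allB k fun X => Nat.ble (cntM k X 0 0) (z (X.count true))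

lemma zX_of_chk (k : ℕ) (z : ℕ → ℕ) (h : chk k z = true) (X : Finset (Fin k)) :
    zX k X ≤ z X.card := by
  refine (zX_le k X).trans ?_
  have := allB_spec k _ h (fun y => decide (y ∈ X))
  rw [Nat.ble_eq, ofFn_count, ← monR_clean, List.length_ofFn] at this
  exact this

lemma codePairs_le' (k V : ℕ) (hk : 2 ≤ k) (z : ℕ → ℕ) (h : chk k z = true)
    (hV : Nat.ble (monR k k 0 (fun L => z (marks 0 L))) V = true) (π : Equiv.Perm (Fin k)) :
    (codePairs k π).card ≤ V :=
  (codePairs_le k hk π z (zX_of_chk k z h)).trans (Nat.le_of_ble_eq_true hV)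

/-- table lookup -/
def tab : List ℕ → ℕ → ℕ
  | [], _ => 0
  | a :: _, 0 => a
  | _ :: L, n + 1 => tab L n

lemma cp2 (π) : (codePairs 2 π).card ≤ 2 :=
  codePairs_le' 2 2 (by norm_num) (tab [6,1,0]) (by decide +kernel) (by decide +kernel) π
lemma cp3 (π) : (codePairs 3 π).card ≤ 48 :=
  codePairs_le' 3 48 (by norm_num) (tab [20,8,2,0]) (by decide +kernel) (by decide +kernel) π
lemma cp4 (π) : (codePairs 4 π).card ≤ 820 :=
  codePairs_le' 4 820 (by norm_num) (tab [70,32,19,5,0]) (by decide +kernel) (by decide +kernel) π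
lemma cp5 (π) : (codePairs 5 π).card ≤ 12928 :=
  codePairs_le' 5 12928 (by norm_num) (tab [252,132,82,52,14,0]) (by decide +kernel)
    (by decide +kernel) π

lemma cp6 (π) : (codePairs 6 π).card ≤ 197512 :=
  codePairs_le' 6 197512 (by norm_num) (tab [924,514,360,235,154,42,0]) (by decide +kernel)
    (by decide +kernel) π


lemma cp7 (π) : (codePairs 7 π).card ≤ 2986368 :=
  codePairs_le' 7 2986368 (by norm_num) (tab [3432,2032,1456,1072,718,480,132,0]) (by decide +kernel)
    (by decide +kernel) π

lemma card_mono_le (k : ℕ) :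
    (Finset.univ.filter fun f : Fin k → Fin (k + 1) => Monotone f).card ≤ (2 * k).choose k := by
  refine le_trans ?_ (card_ordEmb k (2 * k))
  rw [← Fintype.card_subtype, ← Nat.card_eq_fintype_card]
  apply Nat.card_le_card_of_injective (fun f : {f : Fin k → Fin (k + 1) // Monotone f} =>
    OrderEmbedding.ofStrictMono (fun x : Fin k => (⟨(f.1 x : ℕ) + x, by omega⟩ : Fin (2 * k))) (by
      intro x y hxy
      have := f.2 hxy.le
      rw [Fin.lt_def] at hxy ⊢
      rw [Fin.le_def] at this
      simp only
      omega))
  intro f g h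
  apply Subtype.ext
  funext x
  have := congrArg (fun e : Fin k ↪o Fin (2 * k) => (e x : ℕ)) h
  change (f.1 x : ℕ) + x = (g.1 x : ℕ) + x at this
  exact Fin.ext (by omega)

lemma cpk (k : ℕ) (π) : (codePairs k π).card ≤ (2 * k).choose k ^ 2 := by
  rw [sq]
  refine le_trans ?_ (Nat.mul_le_mul (card_mono_le k) (card_mono_le k))
  rw [← Finset.card_product]
  apply Finset.card_le_card
  rintro ⟨f, g⟩ h
  simp only [codePairs, Finset.mem_filter, Finset.mem_univ, true_and] at h
  simp [h.1, h.2.1]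


/-- position of the first copy -/
def eN {j : ℕ} (P : Finset (Fin j)) (r : Fin j) : ℕ := r + (P.filter (· < r)).card

/-- direction of twins -/
def upT {j : ℕ} (τ : Equiv.Perm (Fin j)) (p : Fin j) : Prop :=
  ∃ r : Fin j, (r : ℕ) + 1 = p ∧ τ p < τ r

/-- the doubling facts -/
def DFacts {j k : ℕ} (τ : Equiv.Perm (Fin j)) (P : Finset (Fin j))
    (ρ : Equiv.Perm (Fin (j + k))) : Prop :=
  (∀ (x y : Fin (j + k)) (r s : Fin j), (x : ℕ) = eN P r → (y : ℕ) = eN P s →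
    (ρ x < ρ y ↔ τ r < τ s)) ∧
  (∀ (x y : Fin (j + k)) (p : Fin j), p ∈ P → (x : ℕ) = eN P p → (y : ℕ) = eN P p + 1 →
    (ρ x < ρ y ↔ upT τ p)) ∧
  (∀ (x y : Fin (j + k)) (r p : Fin j), p ∈ P → r ≠ p → (x : ℕ) = eN P r →
    (y : ℕ) = eN P p + 1 → (ρ x < ρ y ↔ τ r < τ p)) ∧
  (∃ A B, OccursOn τ ρ A ∧ OccursOn τ ρ B ∧ A ∪ B = Finset.univ)

lemma eN_step {j : ℕ} (P : Finset (Fin j)) {p r : Fin j} (h : p < r) :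
    eN P p + 1 + (if p ∈ P then 1 else 0) ≤ eN P r := by
  have h0 : (p : ℕ) < r := h
  have h1 : (P.filter (· < p)).card + (if p ∈ P then 1 else 0) ≤ (P.filter (· < r)).card := by
    split_ifs with hp
    · have : insert p (P.filter (· < p)) ⊆ P.filter (· < r) := by
        intro x hx
        simp only [Finset.mem_insert, Finset.mem_filter] at hx ⊢
        rcases hx with rfl | hx
        · exact ⟨hp, h⟩
        · exact ⟨hx.1, hx.2.trans h⟩
      have := Finset.card_le_card this
      rwa [Finset.card_insert_of_notMem (by simp)] at this
    · apply Finset.card_le_card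
      intro x hx
      simp only [Finset.mem_filter] at hx ⊢
      exact ⟨hx.1, hx.2.trans h⟩
  unfold eN
  omega

lemma eN_bound {j k : ℕ} (P : Finset (Fin j)) (hP : P.card = k) (r : Fin j) :
    eN P r + (if r ∈ P then 1 else 0) < j + k := by
  have h0 := r.2
  have h1 : (P.filter (· < r)).card + (if r ∈ P then 1 else 0) ≤ P.card := by
    split_ifs with hp
    · have : insert r (P.filter (· < r)) ⊆ P := by
        intro x hx
        simp only [Finset.mem_insert, Finset.mem_filter] at hx
        rcases hx with rfl | hx
        · exact hp
        · exact hx.1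
      have := Finset.card_le_card this
      rwa [Finset.card_insert_of_notMem (by simp)] at this
    · exact Finset.card_le_card (Finset.filter_subset _ _)
  unfold eN
  omega

lemma exists_double {j k : ℕ} (τ : Equiv.Perm (Fin j)) (P : Finset (Fin j)) (hP : P.card = k) :
    ∃ ρ : Equiv.Perm (Fin (j + k)), DFacts τ P ρ := by
  let Φ : Fin j ⊕ P → Fin (j + k) := Sum.elim
    (fun r => ⟨eN P r, by have := eN_bound P hP r; omega⟩)
    (fun p => ⟨eN P p.1 + 1, by have := eN_bound P hP p.1; simpa [p.2] using this⟩)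
  have hΦ : Function.Injective Φ := by
    have key : ∀ r s : Fin j, r < s → eN P r < eN P s := by
      intro r s h; have := eN_step P h; omega
    have key2 : ∀ r : Fin j, ∀ p ∈ P, eN P r ≠ eN P p + 1 := by
      intro r p hp h
      rcases lt_trichotomy r p with h1 | rfl | h1
      · have := key _ _ h1; omega
      · omega
      · have := eN_step P h1
        rw [if_pos hp] at this; omega
    have key3 : ∀ r s : Fin j, eN P r = eN P s → r = s := by
      intro r s h
      rcases lt_trichotomy r s with h1 | h1 | h1
      · have := key _ _ h1; omega
      · exact h1
      · have := key _ _ h1; omega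
    rintro (r | p) (s | q) h
    · simp only [Φ, Sum.elim_inl, Fin.mk.injEq] at h
      rw [key3 r s h]
    · simp only [Φ, Sum.elim_inl, Sum.elim_inr, Fin.mk.injEq] at h
      exact absurd h (key2 r q.1 q.2)
    · simp only [Φ, Sum.elim_inl, Sum.elim_inr, Fin.mk.injEq] at h
      exact absurd h.symm (key2 s p.1 p.2)
    · simp only [Φ, Sum.elim_inr, Fin.mk.injEq] at h
      rw [Subtype.ext (key3 p.1 q.1 (by omega))]
  have hbij : Function.Bijective Φ := by
    rw [Fintype.bijective_iff_injective_and_card]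
    exact ⟨hΦ, by simp [hP]⟩
  let E := Equiv.ofBijective Φ hbij
  let κ : Fin j ⊕ P → ℕ := Sum.elim (fun r => 3 * (τ r : ℕ) + 1)
    (fun p => if upT τ p.1 then 3 * (τ p.1 : ℕ) + 2 else 3 * (τ p.1 : ℕ))
  have hκ : Function.Injective κ := by
    rintro (r | p) (s | q) h
    · simp only [κ, Sum.elim_inl] at h
      rw [τ.injective (Fin.ext (by omega) : τ r = τ s)]
    · simp only [κ, Sum.elim_inl, Sum.elim_inr] at h
      split_ifs at h <;> omega
    · simp only [κ, Sum.elim_inl, Sum.elim_inr] at h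
      split_ifs at h <;> omega
    · simp only [κ, Sum.elim_inr] at h
      have : τ p.1 = τ q.1 := by
        apply Fin.ext
        split_ifs at h <;> omega
      rw [Subtype.ext (τ.injective this)]
  obtain ⟨ρ, hρ⟩ := exists_std (fun x => κ (E.symm x)) (hκ.comp E.symm.injective)
  have hρ' : ∀ u v, ρ (Φ u) < ρ (Φ v) ↔ κ u < κ v := by
    intro u v
    rw [hρ]
    have e1 : E.symm (Φ u) = u := E.symm_apply_apply u
    have e2 : E.symm (Φ v) = v := E.symm_apply_apply v
    rw [e1, e2]
  have hx1 : ∀ (x : Fin (j + k)) (r : Fin j), (x : ℕ) = eN P r → x = Φ (Sum.inl r) := by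
    intro x r h; exact Fin.ext h
  have hx2 : ∀ (x : Fin (j + k)) (r : Fin j) (hr : r ∈ P), (x : ℕ) = eN P r + 1 →
      x = Φ (Sum.inr ⟨r, hr⟩) := by
    intro x r hr h; exact Fin.ext h
  refine ⟨ρ, ?_, ?_, ?_, ?_⟩
  · intro x y r s hx hy
    rw [hx1 x r hx, hx1 y s hy, hρ']
    simp only [κ, Sum.elim_inl, Fin.lt_def]
    omega
  · intro x y p hp hx hy
    rw [hx1 x p hx, hx2 y p hp hy, hρ']
    simp only [κ, Sum.elim_inl, Sum.elim_inr]
    split_ifs with h <;> simp [h]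
  · intro x y r p hp hrp hx hy
    rw [hx1 x r hx, hx2 y p hp hy, hρ']
    have hne : (τ r : ℕ) ≠ τ p := fun h => hrp (τ.injective (Fin.ext h))
    simp only [κ, Sum.elim_inl, Sum.elim_inr, Fin.lt_def]
    split_ifs with h <;> omega
  · let u : Fin j → Fin j ⊕ P := fun r => if h : r ∈ P then Sum.inr ⟨r, h⟩ else Sum.inl r
    have hu : ∀ r, 3 * (τ r : ℕ) ≤ κ (u r) ∧ κ (u r) ≤ 3 * τ r + 2 := by
      intro r
      by_cases h : r ∈ P
      · simp only [u, h, dif_pos, κ, Sum.elim_inr]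
        split_ifs <;> omega
      · simp only [u, h, dif_neg, not_false_eq_true, κ, Sum.elim_inl]
        omega
    have hu2 : ∀ r, ((Φ (u r) : Fin (j + k)) : ℕ) = eN P r + (if r ∈ P then 1 else 0) := by
      intro r
      by_cases h : r ∈ P
      · simp [u, h, Φ]
      · simp [u, h, Φ]
    refine ⟨Finset.univ.image (fun r => Φ (Sum.inl r)), Finset.univ.image (fun r => Φ (u r)),
      ⟨_, ?_, rfl, ?_⟩, ⟨_, ?_, rfl, ?_⟩, ?_⟩
    · intro r s h
      rw [Fin.lt_def]
      simp only [Φ, Sum.elim_inl]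
      have := eN_step P h; omega
    · intro r s
      rw [hρ']
      simp only [κ, Sum.elim_inl, Fin.lt_def]
      omega
    · intro r s h
      simp only
      rw [Fin.lt_def, hu2, hu2]
      have := eN_step P h
      omega
    · intro r s
      rw [hρ', Fin.lt_def]
      have h1 := hu r
      have h2 := hu s
      by_cases hrs : r = s
      · subst hrs; simp
      have hne : (τ r : ℕ) ≠ τ s := fun h => hrs (τ.injective (Fin.ext h))
      omega
    · ext x
      simp only [Finset.mem_union, Finset.mem_image, Finset.mem_univ, true_and, iff_true]
      obtain ⟨v, rfl⟩ := hbij.2 x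
      rcases v with r | p
      · exact Or.inl ⟨r, rfl⟩
      · exact Or.inr ⟨p.1, by simp [u, p.2]⟩

lemma double_inj_aux {j k : ℕ} (τ : Equiv.Perm (Fin j)) (P P' : Finset (Fin j))
    (hP : P.card = k) (hP' : P'.card = k) (ρ : Equiv.Perm (Fin (j + k)))
    (h : DFacts τ P ρ) (h' : DFacts τ P' ρ) (q : Fin j) (hq' : q ∈ P') (hq : q ∉ P)
    (hmax : ∀ r, q < r → (r ∈ P ↔ r ∈ P')) : False := by
  obtain ⟨F1, F2, F3, -⟩ := h
  obtain ⟨G1, G2, G3, -⟩ := h'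
  have hsplit : ∀ Q : Finset (Fin j), Q.card = (Q.filter (· < q)).card +
      ((if q ∈ Q then 1 else 0) + (Q.filter (q < ·)).card) := by
    intro Q
    have e : (if q ∈ Q then 1 else 0) = (Q.filter (· = q)).card := by
      split_ifs with hm
      · rw [Finset.filter_eq']; simp [hm]
      · rw [Finset.filter_eq']; simp [hm]
    rw [e]
    simp only [Finset.card_filter]
    rw [Finset.card_eq_sum_ones, ← Finset.sum_add_distrib, ← Finset.sum_add_distrib]
    apply Finset.sum_congr rfl
    intro x _
    rcases lt_trichotomy x q with h1 | h1 | h1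
    · simp [h1, h1.ne, h1.le]
    · simp [h1]
    · simp [h1, h1.ne', h1.le]
  have s1 := hsplit P
  have s2 := hsplit P'
  rw [if_neg hq] at s1
  rw [if_pos hq'] at s2
  have s3 : P.filter (q < ·) = P'.filter (q < ·) := by
    ext r
    simp only [Finset.mem_filter]
    constructor
    · rintro ⟨a, b⟩; exact ⟨(hmax r b).1 a, b⟩
    · rintro ⟨a, b⟩; exact ⟨(hmax r b).2 a, b⟩
  rw [s3] at s1
  obtain ⟨c, hc⟩ : ∃ c, c = (P'.filter (· < q)).card := ⟨_, rfl⟩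
  have hcP : (P.filter (· < q)).card = c + 1 := by omega
  have hpos : 0 < (q : ℕ) := by
    have : (P.filter (· < q)).Nonempty := by rw [← Finset.card_pos]; omega
    obtain ⟨r, hr⟩ := this
    have := (Finset.mem_filter.1 hr).2
    rw [Fin.lt_def] at this; omega
  let r1 : Fin j := ⟨q - 1, by omega⟩
  have hr1 : (r1 : ℕ) + 1 = q := by simp only [r1]; omega
  have hr1q : r1 < q := by rw [Fin.lt_def]; omega
  have bnd := eN_bound P hP q
  have eq' : eN P' q = q + c := by rw [eN, ← hc]
  have eq : eN P q = q + c + 1 := by rw [eN, hcP]; omega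
  rw [eq] at bnd
  let X : Fin (j + k) := ⟨q + c, by omega⟩
  let Y : Fin (j + k) := ⟨q + c + 1, by omega⟩
  have hXY : ρ X ≠ ρ Y := by
    intro h
    have := ρ.injective h
    simp [X, Y] at this
  have hup : upT τ q ↔ τ q < τ r1 := by
    constructor
    · rintro ⟨r, hr, hlt⟩
      have : r = r1 := Fin.ext (by omega)
      rwa [← this]
    · intro hlt; exact ⟨r1, hr1, hlt⟩
  have K1 : ρ X < ρ Y ↔ τ q < τ r1 := by
    rw [← hup]
    exact G2 X Y q hq' eq'.symm (by rw [eq'])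
  have hne : τ r1 ≠ τ q := fun h => absurd (τ.injective h) hr1q.ne
  have hfil : P.filter (· < q) = (if r1 ∈ P then insert r1 (P.filter (· < r1))
      else P.filter (· < r1)) := by
    ext x
    split_ifs with hm
    · simp only [Finset.mem_filter, Finset.mem_insert, Fin.lt_def, Fin.ext_iff]
      constructor
      · rintro ⟨a, b⟩
        by_cases hx : (x : ℕ) = r1
        · exact Or.inl hx
        · exact Or.inr ⟨a, by omega⟩
      · rintro (a | a)
        · have : x = r1 := Fin.ext a
          rw [this]; exact ⟨hm, by omega⟩
        · exact ⟨a.1, by omega⟩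
    · simp only [Finset.mem_filter, Fin.lt_def]
      constructor
      · rintro ⟨a, b⟩
        refine ⟨a, ?_⟩
        have : (x : ℕ) ≠ r1 := fun h => hm ((Fin.ext h : x = r1) ▸ a)
        omega
      · rintro ⟨a, b⟩; exact ⟨a, by omega⟩
  by_cases hm : r1 ∈ P
  · rw [if_pos hm] at hfil
    have e1 : eN P r1 + 1 = q + c := by
      rw [eN]
      have := congrArg Finset.card hfil
      rw [Finset.card_insert_of_notMem (by simp), hcP] at this
      omega
    have K2 := F3 Y X q r1 hm hr1q.ne' eq.symm e1.symm
    rw [← K1] at K2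
    rcases lt_or_gt_of_ne hXY with h1 | h1
    · exact absurd (K2.2 h1) (not_lt.2 h1.le)
    · exact absurd (K2.1 h1) (not_lt.2 h1.le)
  · rw [if_neg hm] at hfil
    have e1 : eN P r1 = q + c := by
      rw [eN, ← hfil, hcP]; omega
    have K2 := F1 X Y r1 q e1.symm eq.symm
    rw [K2] at K1
    rcases lt_or_gt_of_ne hne with h1 | h1
    · exact absurd (K1.1 h1) (not_lt.2 h1.le)
    · exact absurd (K1.2 h1) (not_lt.2 h1.le)

lemma double_inj {j k : ℕ} (τ : Equiv.Perm (Fin j)) (P P' : Finset (Fin j))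
    (hP : P.card = k) (hP' : P'.card = k) (ρ : Equiv.Perm (Fin (j + k)))
    (h : DFacts τ P ρ) (h' : DFacts τ P' ρ) : P = P' := by
  by_contra hne
  have hD : (Finset.univ.filter fun r => ¬ (r ∈ P ↔ r ∈ P')).Nonempty := by
    by_contra hcon
    apply hne
    rw [Finset.not_nonempty_iff_eq_empty, Finset.filter_eq_empty_iff] at hcon
    ext r
    exact not_not.1 (hcon (Finset.mem_univ r))
  let q := Finset.max' _ hD
  have hq := Finset.max'_mem _ hD
  change q ∈ _ at hq
  have hmax : ∀ r, q < r → (r ∈ P ↔ r ∈ P') := by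
    intro r hr
    by_contra hcon
    exact absurd (Finset.le_max' (Finset.univ.filter fun r => ¬ (r ∈ P ↔ r ∈ P')) r
      (by simpa using hcon)) (not_le.2 hr)
  rw [Finset.mem_filter] at hq
  by_cases hqP : q ∈ P
  · exact double_inj_aux τ P' P hP' hP ρ h' h q hqP (by tauto) (fun r hr => (hmax r hr).symm)
  · exact double_inj_aux τ P P' hP hP' ρ h h' q (by tauto) hqP hmax

lemma Lc_lower {j : ℕ} (τ : Equiv.Perm (Fin j)) (k : ℕ) : j.choose k ≤ Lc τ k := by
  have h0 : j.choose k = (Finset.powersetCard k (Finset.univ : Finset (Fin j))).card := by simp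
  rw [h0, Lc]
  have hex : ∀ P : Finset (Fin j), P.card = k → ∃ ρ : Equiv.Perm (Fin (j + k)), DFacts τ P ρ :=
    fun P hP => exists_double τ P hP
  choose! ρ hρ using hex
  apply Finset.card_le_card_of_injOn ρ
  · intro P hP
    have hP := (Finset.mem_powersetCard.1 hP).2
    have := (hρ P hP).2.2.2
    simpa using this
  · intro P hP P' hP' heq
    have hP := (Finset.mem_powersetCard.1 hP).2
    have hP' := (Finset.mem_powersetCard.1 hP').2
    have h1 := hρ P hP
    have h2 := hρ P' hP'
    rw [← heq] at h2
    exact double_inj τ P P' hP hP' _ h1 h2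


theorem Lc_le_overlap {j : ℕ} (τ : Equiv.Perm (Fin j)) (k : ℕ) (hk : k ≤ j) :
    Lc τ k ≤ overlapCount τ (j - k) := by
  have key : ∀ N (h : N = j + k), Lc τ k = Set.ncard {ρ : Equiv.Perm (Fin N) |
      ∃ A B, OccursOn τ ρ A ∧ OccursOn τ ρ B ∧ A ∪ B = Finset.univ} := by
    intro N h
    subst h
    unfold Lc
    rw [← Set.ncard_coe_finset]
    congr 1
    ext ρ
    simp
  have hN : 2 * j - (j - k) = j + k := by omega
  rw [key _ hN]
  unfold overlapCount
  apply Set.ncard_le_ncard _ (Set.toFinite _)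
  rintro ρ ⟨A, B, hA, hB, hAB⟩
  have h1 := hA.card
  have h2 := hB.card
  refine ⟨A, B, h1, h2, ?_, hA, hB⟩
  have h3 := Finset.card_union_add_card_inter A B
  rw [hAB, Finset.card_univ, Fintype.card_fin] at h3
  omega

theorem half_tv_le {p q B : ℕ → ℝ} {b : ℝ} (hp : HasSum p 1) (hq : HasSum q 1)
    (hB : HasSum B b) (h : ∀ k, p k - q k ≤ B k) (h0 : ∀ k, 0 ≤ B k) :
    (1 / 2) * ∑' k, |p k - q k| ≤ b := by
  have hs : HasSum (fun k => 2 * B k - (p k - q k)) (2 * b - (1 - 1)) :=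
    (hB.mul_left 2).sub (hp.sub hq)
  have hle : ∀ k, |p k - q k| ≤ 2 * B k - (p k - q k) := by
    intro k
    have := h k
    have := h0 k
    rw [abs_le]
    constructor <;> linarith
  have hsum : Summable fun k => |p k - q k| := (hp.summable.sub hq.summable).abs
  have := hsum.tsum_le_tsum hle hs.summable
  rw [hs.tsum_eq] at this
  linarith

section tv
variable {n : ℕ} (W : Equiv.Perm (Fin n) → ℕ)

theorem hasSum_W_aux (f : ℕ → ℝ) (k : ℕ) : unifProb {σ | W σ = k} * f k =
    (∑ σ : Equiv.Perm (Fin n), if k = W σ then f (W σ) else 0) / (n.factorial : ℝ) := by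
  unfold unifProb
  rw [div_mul_eq_mul_div]
  congr 1
  have : ({σ | W σ = k} : Set (Equiv.Perm (Fin n))) =
      ((Finset.univ.filter fun σ => W σ = k : Finset _) : Set _) := by ext; simp
  rw [this, Set.ncard_coe_finset, ← Finset.sum_filter]
  rw [Finset.sum_congr (s₂ := Finset.univ.filter fun σ => W σ = k) (g := fun _ => f k)]
  · simp
  · ext; simp [eq_comm]
  · intro x hx; simp at hx; rw [hx]

theorem hasSum_W (f : ℕ → ℝ) :
    HasSum (fun k => unifProb {σ | W σ = k} * f k) ((∑ σ, f (W σ)) / (n.factorial : ℝ)) := by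
  have h : HasSum (fun k => ∑ σ : Equiv.Perm (Fin n), if k = W σ then f (W σ) else 0)
      (∑ σ, f (W σ)) :=
    hasSum_sum fun σ _ => hasSum_ite_eq (W σ) (f (W σ))
  have h2 := h.div_const (n.factorial : ℝ)
  have hfun : (fun k => unifProb {σ | W σ = k} * f k) = fun k =>
      (∑ σ : Equiv.Perm (Fin n), if k = W σ then f (W σ) else 0) / (n.factorial : ℝ) := by
   funext k
   exact hasSum_W_aux W f k
  rw [hfun]
  exact h2

theorem hasSum_pois (l : ℝ) : HasSum (poissonPMF l) 1 := by
  have h := (NormedSpace.expSeries_div_hasSum_exp l).mul_left (Real.exp (-l))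
  rw [← Real.exp_eq_exp_ℝ, ← Real.exp_add] at h
  rw [neg_add_cancel, Real.exp_zero] at h
  have hf : poissonPMF l = fun k => Real.exp (-l) * (l ^ k / (k.factorial : ℝ)) := by
    funext k
    simp [poissonPMF]
    ring
  rw [hf]
  exact h

theorem avg_le {f g : Equiv.Perm (Fin n) → ℝ} (h : ∀ σ, f σ ≤ g σ) :
    (∑ σ, f σ) / (n.factorial : ℝ) ≤ (∑ σ, g σ) / (n.factorial : ℝ) := by
  have := Finset.sum_le_sum (fun σ (_ : σ ∈ Finset.univ) => h σ)
  gcongr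

theorem avg_one : (∑ _σ : Equiv.Perm (Fin n), (1 : ℝ)) / (n.factorial : ℝ) = 1 := by
  have : (n.factorial : ℝ) ≠ 0 := by positivity
  simp [Fintype.card_perm, this]

theorem p_eq (k : ℕ) : unifProb {σ | W σ = k} =
    (∑ σ, if W σ = k then (1 : ℝ) else 0) / (n.factorial : ℝ) := by
  have h := hasSum_W W (fun i => if i = k then 1 else 0)
  have h2 := hasSum_single k (f := (fun i => unifProb {σ | W σ = i} * (if i = k then 1 else 0)))
    (by intro b hb; simp [hb])
  have := h2.unique h
  simpa using this

theorem p_nonneg (k : ℕ) : 0 ≤ unifProb {σ | W σ = k} := by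
  unfold unifProb; positivity

theorem pois_nonneg {l : ℝ} (hl : 0 ≤ l) (k : ℕ) : 0 ≤ poissonPMF l k := by
  unfold poissonPMF; positivity

theorem hasSum_p : HasSum (fun k => unifProb {σ | W σ = k}) 1 := by
  have := hasSum_W W (fun _ => 1)
  rw [avg_one] at this
  simpa using this

theorem tv_le_one {l : ℝ} (hl : 0 ≤ l) : dTVNatUnif W l ≤ 1 :=
  half_tv_le (hasSum_p W) (hasSum_pois l) (hasSum_p W)
    (fun k => by have := pois_nonneg hl k; linarith) (p_nonneg W)

theorem p0_eq : unifProb {σ | W σ = 0} =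
    1 - (∑ σ, if 1 ≤ W σ then (1 : ℝ) else 0) / (n.factorial : ℝ) := by
  rw [p_eq, eq_sub_iff_add_eq, ← add_div, ← Finset.sum_add_distrib]
  refine Eq.trans ?_ (avg_one (n := n))
  congr 1
  apply Finset.sum_congr rfl
  intro σ _
  rcases Nat.eq_zero_or_pos (W σ) with h | h
  · simp [h]
  · have : W σ ≠ 0 := by omega
    have h' : 1 ≤ W σ := h
    rw [if_neg this, if_pos h']; norm_num

theorem ge1_le {l : ℝ} (hE : (∑ σ, (W σ : ℝ)) / (n.factorial : ℝ) = l) :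
    (∑ σ, if 1 ≤ W σ then (1 : ℝ) else 0) / (n.factorial : ℝ) ≤ l := by
  rw [← hE]
  apply avg_le
  intro σ
  split_ifs with h
  · exact_mod_cast h
  · positivity

theorem tv_le_lam {l : ℝ} (hl : 0 ≤ l) (hE : (∑ σ, (W σ : ℝ)) / (n.factorial : ℝ) = l) :
    dTVNatUnif W l ≤ l := by
  have h1 := ge1_le W hE
  have h0 := p0_eq W
  have hS := (hasSum_ite_eq (0 : ℕ) (max (unifProb {σ | W σ = 0} - poissonPMF l 0) 0)).add
    (hasSum_W W (fun k => if 1 ≤ k then 1 else 0))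
  refine (half_tv_le (hasSum_p W) (hasSum_pois l) hS ?_ ?_).trans ?_
  · intro k
    rcases Nat.eq_zero_or_pos k with h | h
    · subst h; simp
    · have : k ≠ 0 := by omega
      have h' : 1 ≤ k := h
      have := pois_nonneg hl k
      simp [*]
  · intro k
    have := p_nonneg W k
    have := le_max_right (unifProb {σ | W σ = 0} - poissonPMF l 0) 0
    refine add_nonneg ?_ (mul_nonneg (p_nonneg W k) ?_) <;>
    split_ifs <;> first | assumption | norm_num
  · have he : poissonPMF l 0 = Real.exp (-l) := by simp [poissonPMF]
    have := Real.add_one_le_exp (-l)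
    rw [he]
    rcases max_cases (unifProb {σ | W σ = 0} - Real.exp (-l)) 0 with h | h <;> linarith [h.1]

theorem tv_le_big {l : ℝ} (hl : 0 ≤ l) (hE : (∑ σ, (W σ : ℝ)) / (n.factorial : ℝ) = l) :
    dTVNatUnif W l ≤ ((∑ σ, if 2 ≤ W σ then W σ else 0 : ℕ) : ℝ) / (n.factorial : ℝ) + l ^ 2 := by
  have h1 := ge1_le W hE
  have h0 := p0_eq W
  have hS := ((hasSum_ite_eq (0 : ℕ)
    (l - (∑ σ, if 1 ≤ W σ then (1 : ℝ) else 0) / (n.factorial : ℝ))).add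
    (hasSum_ite_eq (1 : ℕ) (l ^ 2))).add (hasSum_W W (fun k => if 2 ≤ k then 1 else 0))
  have hexp := Real.add_one_le_exp (-l)
  refine (half_tv_le (hasSum_p W) (hasSum_pois l) hS ?_ ?_).trans (le_of_eq ?_)
  · intro k
    have hk : k = 0 ∨ k = 1 ∨ 2 ≤ k := by omega
    rcases hk with h | h | h
    · subst h
      have he : poissonPMF l 0 = Real.exp (-l) := by simp [poissonPMF]
      rw [he, h0]
      simp
      linarith
    · subst h
      have he : poissonPMF l 1 = Real.exp (-l) * l := by simp [poissonPMF]
      have hp1 : unifProb {σ | W σ = 1} ≤ l := by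
        rw [p_eq, ← hE]
        apply avg_le
        intro σ
        split_ifs with h
        · simp [h]
        · positivity
      rw [he]
      simp
      nlinarith
    · have h2 : k ≠ 0 := by omega
      have h3 : k ≠ 1 := by omega
      have := pois_nonneg hl k
      simp [*]
  · intro k
    have := p_nonneg W k
    have : 0 ≤ l - (∑ σ, if 1 ≤ W σ then (1 : ℝ) else 0) / (n.factorial : ℝ) := by linarith
    have : 0 ≤ l ^ 2 := by positivity
    refine add_nonneg (add_nonneg ?_ ?_) (mul_nonneg (p_nonneg W k) ?_) <;>
    split_ifs <;> first | assumption | norm_num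
  · have : (((∑ σ, if 2 ≤ W σ then W σ else 0 : ℕ) : ℝ)) / (n.factorial : ℝ) =
      (∑ σ, (W σ : ℝ)) / (n.factorial : ℝ)
       - (∑ σ, if 1 ≤ W σ then (1 : ℝ) else 0) / (n.factorial : ℝ)
       + (∑ σ, if 2 ≤ W σ then (1 : ℝ) else 0) / (n.factorial : ℝ) := by
      rw [← sub_div, ← add_div, ← Finset.sum_sub_distrib, ← Finset.sum_add_distrib]
      push_cast
      congr 1
      apply Finset.sum_congr rfl
      intro σ _
      have hk : W σ = 0 ∨ W σ = 1 ∨ 2 ≤ W σ := by omega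
      rcases hk with h | h | h
      · simp [h]
      · simp [h]
      · have : 1 ≤ W σ := by omega
        simp [h, this]
    rw [this, hE]
    ring

end tv

def vB (k : ℕ) : ℕ :=
  if k = 2 then 2 else if k = 3 then 48 else if k = 4 then 820 else if k = 5 then 12928 else
  if k = 6 then 197512 else if k = 7 then 2986368 else (2 * k).choose k ^ 2

theorem cp_vB (k : ℕ) (π : Equiv.Perm (Fin k)) : (codePairs k π).card ≤ vB k := by
  unfold vB
  split_ifs with h2 h3 h4 h5 h6 h7
  · subst h2; exact cp2 π
  · subst h3; exact cp3 π
  · subst h4; exact cp4 π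
  · subst h5; exact cp5 π
  · subst h6; exact cp6 π
  · subst h7; exact cp7 π
  · exact cpk k π

def TT (n j k : ℕ) : ℝ := (n.choose (j + k) : ℝ) / ((j + k).factorial : ℝ) * (j.choose k : ℝ)

theorem TT_nonneg (n j k : ℕ) : 0 ≤ TT n j k := by unfold TT; positivity

theorem TT_step {n j k t : ℕ} (hn : n = j + t) (ht : 4 * t ≤ j + 2) (hk : 1 ≤ k) :
    4 * ((k : ℝ) + 1) * TT n j (k + 1) ≤ TT n j k := by
  have h1 : n.choose (j + k + 1) * (j + k + 1) = n.choose (j + k) * (t - k) := by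
    rw [Nat.choose_succ_right_eq]; congr 1; omega
  have h2 : j.choose (k + 1) * (k + 1) = j.choose k * (j - k) := Nat.choose_succ_right_eq j k
  have h3 : 4 * ((t - k) * (j - k)) ≤ (j + k + 1) ^ 2 := by
    have : 4 * (t - k) ≤ j := by omega
    have h' : j - k ≤ j := by omega
    nlinarith [Nat.mul_le_mul this h']
  have h1' : (n.choose (j + k + 1) : ℝ) * (j + k + 1) = n.choose (j + k) * ((t - k : ℕ) : ℝ) := by
    exact_mod_cast h1
  have h2' : (j.choose (k + 1) : ℝ) * (k + 1) = j.choose k * ((j - k : ℕ) : ℝ) := by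
    exact_mod_cast h2
  have h3' : 4 * (((t - k : ℕ) : ℝ) * ((j - k : ℕ) : ℝ)) ≤ ((j : ℝ) + k + 1) ^ 2 := by
    exact_mod_cast h3
  unfold TT
  rw [← add_assoc, Nat.factorial_succ]
  push_cast
  have hq : (0 : ℝ) < (j : ℝ) + k + 1 := by positivity
  have hf : (0 : ℝ) < ((j + k).factorial : ℝ) := by positivity
  have e : 4 * ((k : ℝ) + 1) * ((n.choose (j + k + 1) : ℝ) / (((j : ℝ) + k + 1) * (j + k).factorial)
      * (j.choose (k + 1) : ℝ)) =
      (n.choose (j + k) : ℝ) * (j.choose k : ℝ) / (j + k).factorial *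
        (4 * (((t - k : ℕ) : ℝ) * ((j - k : ℕ) : ℝ)) / ((j : ℝ) + k + 1) ^ 2) := by
    have : 4 * ((k : ℝ) + 1) * ((n.choose (j + k + 1) : ℝ) / (((j : ℝ) + k + 1) * (j + k).factorial)
      * (j.choose (k + 1) : ℝ)) = 4 * ((n.choose (j + k + 1) : ℝ) * (j + k + 1)) *
       ((j.choose (k + 1) : ℝ) * (k + 1)) / ((j + k).factorial * ((j : ℝ) + k + 1) ^ 2) := by
      field_simp
    rw [this, h1', h2']
    field_simp
  rw [e]
  have h4 : 4 * (((t - k : ℕ) : ℝ) * ((j - k : ℕ) : ℝ)) / ((j : ℝ) + k + 1) ^ 2 ≤ 1 := by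
    rw [div_le_one (by positivity)]; exact h3'
  have h5 : (0 : ℝ) ≤ (n.choose (j + k) : ℝ) * (j.choose k : ℝ) / (j + k).factorial := by positivity
  calc _ ≤ (n.choose (j + k) : ℝ) * (j.choose k : ℝ) / (j + k).factorial * 1 :=
        mul_le_mul_of_nonneg_left h4 h5
    _ = _ := by ring

theorem cb_step (k : ℕ) : (2 * (k + 1)).choose (k + 1) ≤ 4 * (2 * k).choose k := by
  have := Nat.succ_mul_centralBinom_succ k
  simp only [Nat.centralBinom] at this
  have h : (k + 1) * (2 * (k + 1)).choose (k + 1) ≤ (k + 1) * (4 * (2 * k).choose k) := by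
    rw [this]
    nlinarith [Nat.zero_le ((2 * k).choose k)]
  exact Nat.le_of_mul_le_mul_left h (by omega)

theorem XX_step {n j k t : ℕ} (hn : n = j + t) (ht : 4 * t ≤ j + 2) (hk : 8 ≤ k) :
    9 * (((2 * (k + 1)).choose (k + 1) : ℝ) ^ 2 * TT n j (k + 1)) ≤
     4 * (((2 * k).choose k : ℝ) ^ 2 * TT n j k) := by
  have h1 := TT_step hn ht (k := k) (by omega)
  have h2 : ((2 * (k + 1)).choose (k + 1) : ℝ) ≤ 4 * (2 * k).choose k := by
    exact_mod_cast cb_step k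
  have h3 : ((2 * (k + 1)).choose (k + 1) : ℝ) ^ 2 ≤ 16 * ((2 * k).choose k : ℝ) ^ 2 := by
    have := pow_le_pow_left₀ (by positivity) h2 2
    linarith [this, mul_pow (4 : ℝ) ((2 * k).choose k : ℝ) 2]
  have hT := TT_nonneg n j (k + 1)
  have hk' : (8 : ℝ) ≤ k := by exact_mod_cast hk
  have h4 : 36 * TT n j (k + 1) ≤ TT n j k := by nlinarith
  have h5 := mul_le_mul_of_nonneg_right h3 hT
  have h6 := mul_le_mul_of_nonneg_left h4 (sq_nonneg ((2 * k).choose k : ℝ))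
  nlinarith

theorem tail {n j t : ℕ} (hn : n = j + t) (ht : 4 * t ≤ j + 2) (m : ℕ) :
    ∑ k ∈ Finset.Icc 8 (8 + m), ((2 * k).choose k : ℝ) ^ 2 * TT n j k +
      4 / 5 * (((2 * (8 + m)).choose (8 + m) : ℝ) ^ 2 * TT n j (8 + m)) ≤
      9 / 5 * (((2 * 8).choose 8 : ℝ) ^ 2 * TT n j 8) := by
  induction m with
  | zero => simp; linarith
  | succ m ih =>
    rw [← add_assoc, Finset.sum_Icc_succ_top (by omega)]
    have := XX_step hn ht (k := 8 + m) (by omega)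
    linarith

theorem numer {n j t : ℕ} (hn : n = j + t) (ht : 4 * t ≤ j + 2) :
    ∑ k ∈ Finset.Icc 1 t, ((vB k : ℝ) / 2 - 3) * TT n j k ≤ 0 := by
  have hz : ∀ k, t < k → TT n j k = 0 := by
    intro k hk
    unfold TT
    rw [Nat.choose_eq_zero_of_lt (by omega)]
    simp
  have e : ∑ k ∈ Finset.Icc 1 t, ((vB k : ℝ) / 2 - 3) * TT n j k =
      ∑ k ∈ Finset.Icc 1 (8 + t), ((vB k : ℝ) / 2 - 3) * TT n j k := by
    apply Finset.sum_subset
    · intro k; simp; omega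
    · intro k h1 h2
      simp at h1 h2
      rw [hz k (by omega), mul_zero]
  rw [e]
  have e2 : Finset.Icc 1 (8 + t) = Finset.Icc 1 7 ∪ Finset.Icc 8 (8 + t) := by
    ext k; simp; omega
  rw [e2, Finset.sum_union (by
    rw [Finset.disjoint_left]; intro k; simp; omega)]
  have hs : ∑ k ∈ Finset.Icc 8 (8 + t), ((vB k : ℝ) / 2 - 3) * TT n j k ≤
      1 / 2 * ∑ k ∈ Finset.Icc 8 (8 + t), ((2 * k).choose k : ℝ) ^ 2 * TT n j k := by
    rw [Finset.mul_sum]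
    apply Finset.sum_le_sum
    intro k hk
    simp at hk
    have : vB k = (2 * k).choose k ^ 2 := by
      unfold vB
      rw [if_neg, if_neg, if_neg, if_neg, if_neg, if_neg] <;> omega
    rw [this]
    push_cast
    have := TT_nonneg n j k
    nlinarith
  have ht8 := tail hn ht t
  have hpos : 0 ≤ (((2 * (8 + t)).choose (8 + t) : ℝ) ^ 2 * TT n j (8 + t)) :=
    mul_nonneg (by positivity) (TT_nonneg _ _ _)
  have hc8 : (((2 * 8).choose 8 : ℕ) : ℝ) = 12870 := by norm_num [Nat.choose]
  rw [hc8] at ht8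
  have e7 : ∑ k ∈ Finset.Icc 1 7, ((vB k : ℝ) / 2 - 3) * TT n j k =
     - TT n j 1 - 2 * TT n j 2 + 21 * TT n j 3 + 407 * TT n j 4 + 6461 * TT n j 5
      + 98753 * TT n j 6 + 1493181 * TT n j 7 := by
    simp only [Finset.sum_Icc_succ_top (show 1 ≤ 7 by norm_num),
      Finset.sum_Icc_succ_top (show 1 ≤ 6 by norm_num), Finset.sum_Icc_succ_top (show 1 ≤ 5 by norm_num),
      Finset.sum_Icc_succ_top (show 1 ≤ 4 by norm_num), Finset.sum_Icc_succ_top (show 1 ≤ 3 by norm_num),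
      Finset.sum_Icc_succ_top (show 1 ≤ 2 by norm_num), Finset.Icc_self, Finset.sum_singleton]
    norm_num [vB, Nat.choose]
    ring
  rw [e7]
  have s1 := TT_step hn ht (k := 1) (by norm_num)
  have s2 := TT_step hn ht (k := 2) (by norm_num)
  have s3 := TT_step hn ht (k := 3) (by norm_num)
  have s4 := TT_step hn ht (k := 4) (by norm_num)
  have s5 := TT_step hn ht (k := 5) (by norm_num)
  have s6 := TT_step hn ht (k := 6) (by norm_num)
  have s7 := TT_step hn ht (k := 7) (by norm_num)
  norm_num at s1 s2 s3 s4 s5 s6 s7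
  have p8 := TT_nonneg n j 8
  linarith

theorem four_pow_le (j : ℕ) (hj : 6 ≤ j) : 4 ^ (j - 2) ≤ j.factorial := by
  induction j, hj using Nat.le_induction with
  | base => decide
  | succ j hj ih =>
    rw [Nat.factorial_succ, show j + 1 - 2 = (j - 2) + 1 by omega, pow_succ, mul_comm]
    exact Nat.mul_le_mul (by omega) ih

theorem choose_le_fact {j t : ℕ} (hj : 3 ≤ j) (ht : 4 * (t * j) < (j + 1) ^ 2) (ht2 : 4 * t ≤ j + 2) :
    (j + t).choose j ≤ j.factorial := by
  rcases Nat.lt_or_ge j 6 with h | h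
  · have : t ≤ 1 := by omega
    interval_cases t
    · simp; exact Nat.factorial_pos j
    · interval_cases j <;> decide
  · calc (j + t).choose j ≤ 2 ^ (j + t) := Nat.choose_le_two_pow _ _
      _ ≤ 2 ^ (2 * (j - 2)) := Nat.pow_le_pow_right (by norm_num) (by omega)
      _ = 4 ^ (j - 2) := by rw [pow_mul]; norm_num
      _ ≤ _ := four_pow_le j h

theorem d2_lower {j : ℕ} (n : ℕ) (τ : Equiv.Perm (Fin j)) :
    ∑ k ∈ Finset.Icc 1 (j - 1), (n.choose (j + k) : ℝ) * 2 * (Lc τ k : ℝ) / ((j + k).factorial : ℝ)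
     ≤ ∑ s ∈ Finset.Icc 1 (j - 1),
        (n.choose (2 * j - s) : ℝ) * 2 * (overlapCount τ s : ℝ) / ((2 * j - s).factorial : ℝ) := by
  have e : ∑ s ∈ Finset.Icc 1 (j - 1),
        (n.choose (2 * j - s) : ℝ) * 2 * (overlapCount τ s : ℝ) / ((2 * j - s).factorial : ℝ) =
      ∑ k ∈ Finset.Icc 1 (j - 1),
        (n.choose (j + k) : ℝ) * 2 * (overlapCount τ (j - k) : ℝ) / ((j + k).factorial : ℝ) := by
    apply Finset.sum_nbij' (fun s => j - s) (fun s => j - s)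
    · intro s; simp; omega
    · intro s; simp; omega
    · intro s; simp; omega
    · intro s; simp; omega
    · intro s hs
      simp at hs
      rw [show 2 * j - s = j + (j - s) by omega, show j - (j - s) = s by omega]
  rw [e]
  apply Finset.sum_le_sum
  intro k hk
  simp at hk
  have : (Lc τ k : ℝ) ≤ overlapCount τ (j - k) := by
    exact_mod_cast Lc_le_overlap τ k (by omega)
  gcongr

/-- Theorem: Poisson approximation for the number of occurrences of a pattern `τ` of
length `j` in a uniformly random permutation of `[n]`. -/
theorem stmt0 (n j : ℕ) (hj : 3 ≤ j) (hjn : j ≤ n) (τ : Equiv.Perm (Fin j))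
    (W : Equiv.Perm (Fin n) → ℕ)
    (hW : ∀ σ, W σ = (Finset.univ.filter fun α : Finset (Fin n) =>
        α.card = j ∧ OccursOn τ σ α).card)
    (lam d1 d2 D : ℝ)
    (hlam : lam = (n.choose j : ℝ) / (j.factorial : ℝ))
    (hd1 : d1 = (n.choose j : ℝ) * ((n.choose j : ℝ) - ((n - j).choose j : ℝ))
        / (j.factorial : ℝ) ^ 2)
    (hd2 : d2 = ∑ s ∈ Finset.Icc 1 (j - 1),
        (n.choose (2 * j - s) : ℝ) * 2 * (overlapCount τ s : ℝ) / ((2 * j - s).factorial : ℝ))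
    (hD : D = min 1 lam⁻¹ * (d1 + d2)) :
    dTVNatUnif W lam ≤ 2 * D := by
  have hfj : (0 : ℝ) < (j.factorial : ℝ) := by positivity
  have hfn : (0 : ℝ) < (n.factorial : ℝ) := by positivity
  have hch : 0 < n.choose j := Nat.choose_pos hjn
  have hl : 0 < lam := by rw [hlam]; positivity
  have hE : (∑ σ, (W σ : ℝ)) / (n.factorial : ℝ) = lam := by
    have h := sum_occ (n := n) τ
    simp only [← hW] at h
    have h' : (∑ σ, (W σ : ℝ)) * j.factorial = n.choose j * n.factorial := by exact_mod_cast h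
    rw [hlam, div_eq_div_iff hfn.ne' hfj.ne']
    exact h'
  have hd2l := d2_lower n τ
  rw [← hd2] at hd2l
  obtain ⟨t, rfl⟩ := Nat.exists_eq_add_of_le hjn
  rw [Nat.add_sub_cancel_left] at hd1
  have hd1n : 0 ≤ d1 := by
    rw [hd1]
    have : (t.choose j : ℝ) ≤ ((j + t).choose j : ℝ) := by
      exact_mod_cast Nat.choose_le_choose j (by omega)
    have : 0 ≤ ((j + t).choose j : ℝ) - (t.choose j : ℝ) := by linarith
    positivity
  rcases Nat.lt_or_ge (4 * (t * j)) ((j + 1) ^ 2) with hc | hc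
  · have ht : 4 * t ≤ j + 2 := by nlinarith
    have hl1 : lam ≤ 1 := by
      rw [hlam, div_le_one hfj]
      exact_mod_cast choose_le_fact hj hc ht
    have hmin : min 1 lam⁻¹ = 1 := min_eq_left ((one_le_inv₀ hl).2 hl1)
    rw [hmin, one_mul] at hD
    have hd1e : d1 = lam ^ 2 := by
      rw [hd1, hlam, Nat.choose_eq_zero_of_lt (show t < j by omega)]
      simp
      field_simp
    have h1 := tv_le_big W hl.le hE
    have h2 := iso_reduction τ W hW
    rw [Nat.add_sub_cancel_left] at h2
    have h3 : ((∑ σ, if 2 ≤ W σ then W σ else 0 : ℕ) : ℝ) / ((j + t).factorial : ℝ) ≤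
      ∑ k ∈ Finset.Icc 1 t, ((j + t).choose (j + k) : ℝ) / ((j + k).factorial : ℝ) *
        (isoTot τ k : ℝ) := by
      rw [div_le_iff₀ hfn, mul_comm]; exact h2
    have h4 : ∀ k ∈ Finset.Icc 1 t,
        ((j + t).choose (j + k) : ℝ) / ((j + k).factorial : ℝ) * (isoTot τ k : ℝ) ≤
        2 * (((j + t).choose (j + k) : ℝ) * 2 * (Lc τ k : ℝ) / ((j + k).factorial : ℝ)) +
        ((vB k : ℝ) / 2 - 3) * TT (j + t) j k := by
      intro k hk
      simp at hk
      have a := isoTot_bound τ k (vB k) hk.1 (cp_vB k)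
      have a' : 2 * (isoTot τ k : ℝ) ≤ 2 * Lc τ k + j.choose k * vB k := by exact_mod_cast a
      have b : (j.choose k : ℝ) ≤ Lc τ k := by exact_mod_cast Lc_lower τ k
      have c : (isoTot τ k : ℝ) ≤ 4 * Lc τ k + ((vB k : ℝ) / 2 - 3) * j.choose k := by linarith
      have d := mul_le_mul_of_nonneg_left c
        (show (0 : ℝ) ≤ ((j + t).choose (j + k) : ℝ) / ((j + k).factorial : ℝ) by positivity)
      refine d.trans (le_of_eq ?_)
      unfold TT
      ring
    have h5 := Finset.sum_le_sum h4
    rw [Finset.sum_add_distrib, ← Finset.mul_sum] at h5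
    have h6 := numer (n := j + t) (j := j) rfl ht
    have h7 : ∑ k ∈ Finset.Icc 1 t,
        (((j + t).choose (j + k) : ℝ) * 2 * (Lc τ k : ℝ) / ((j + k).factorial : ℝ)) ≤
        ∑ k ∈ Finset.Icc 1 (j - 1),
        (((j + t).choose (j + k) : ℝ) * 2 * (Lc τ k : ℝ) / ((j + k).factorial : ℝ)) := by
      apply Finset.sum_le_sum_of_subset_of_nonneg
      · intro k; simp; omega
      · intros; positivity
    have h8 : 0 ≤ lam ^ 2 := by positivity
    rw [hD, hd1e]
    linarith
  · have hterm : ((j + t).choose (j + 1) : ℝ) * 2 * (Lc τ 1 : ℝ) / ((j + 1).factorial : ℝ) ≤ d2 := by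
      refine le_trans ?_ hd2l
      exact Finset.single_le_sum (s := Finset.Icc 1 (j - 1)) (a := 1)
        (f := fun k => ((j + t).choose (j + k) : ℝ) * 2 * (Lc τ k : ℝ) / ((j + k).factorial : ℝ))
        (fun k _ => by positivity) (by simp; omega)
    have hL : (j : ℝ) ≤ Lc τ 1 := by
      have := Lc_lower τ 1
      rw [Nat.choose_one_right] at this
      exact_mod_cast this
    have hC : ((j + t).choose (j + 1) : ℝ) * (j + 1) = (j + t).choose j * t := by
      have := Nat.choose_succ_right_eq (j + t) j
      rw [Nat.add_sub_cancel_left] at this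
      exact_mod_cast this
    have hc' : ((j : ℝ) + 1) ^ 2 ≤ 4 * (t * j) := by exact_mod_cast hc
    have hkey : lam ≤ 2 * d2 := by
      have h1 : lam ≤ 2 * (((j + t).choose (j + 1) : ℝ) * 2 * (j : ℝ) / ((j + 1).factorial : ℝ)) := by
        have e : 2 * (((j + t).choose (j + 1) : ℝ) * 2 * (j : ℝ) / ((j + 1).factorial : ℝ)) =
          lam * (4 * (t * j) / ((j : ℝ) + 1) ^ 2) := by
          have : ((j + t).choose (j + 1) : ℝ) = (j + t).choose j * t / (j + 1) := by
            rw [eq_div_iff (by positivity)]; exact hC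
          rw [this, hlam, Nat.factorial_succ]
          push_cast
          field_simp
          ring
        rw [e]
        have : 1 ≤ 4 * (t * j) / ((j : ℝ) + 1) ^ 2 := by
          rw [one_le_div (by positivity)]; exact hc'
        nlinarith
      have h2 : ((j + t).choose (j + 1) : ℝ) * 2 * (j : ℝ) / ((j + 1).factorial : ℝ) ≤
          ((j + t).choose (j + 1) : ℝ) * 2 * (Lc τ 1 : ℝ) / ((j + 1).factorial : ℝ) := by
        gcongr
      linarith
    have hb : lam ≤ 2 * (d1 + d2) := by linarith
    have hm : 0 ≤ min 1 lam⁻¹ := le_min zero_le_one (by positivity)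
    have h2D : min 1 lam⁻¹ * lam ≤ 2 * D := by
      rw [hD]
      nlinarith [mul_le_mul_of_nonneg_left hb hm]
    refine le_trans ?_ h2D
    rcases min_cases 1 lam⁻¹ with h | h
    · rw [h.1, one_mul]; exact tv_le_lam W hl.le hE
    · rw [h.1, inv_mul_cancel₀ hl.ne']; exact tv_le_one W hl.le


end
end

section
/- Fix η ≥ 0, and let j(n) be an increasing integer-valued function of n with j(n) ≥ (e·e^{1/e} + η)·√n for all n. Let τ_n ∈ S_{j(n)} be any sequence of patterns. For each n, let Σ_n be a uniformly random permutation of [n], let 𝕏_n = (X_α)_{α ∈ Γ_{j(n)}} be the family of indicators that τ_n occurs at the j(n)-element position set α, where Γ_{j(n)} is the set of all j(n)-element subsets of [n], and let 𝔹_n = (B_α) be independent Bernoulli random variables with E B_α = E X_α for all α. Then d_TV( L(𝕏_n), L(𝔹_n) ) → 0 as n → ∞; equivalently, for every function h : {0,1}^{Γ_{j(n)}} → ℝ and every Borel set A ⊆ ℝ, P(h(𝕏_n) ∈ A) = P(h(𝔹_n) ∈ A) + o(1). -/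
open scoped Classical
open Filter

noncomputable section

theorem perm_eq_of_lt_iff {m : ℕ} (a b : Equiv.Perm (Fin m))
    (h : ∀ k l, a k < a l ↔ b k < b l) : a = b := by
  have hmono : StrictMono (fun x => b (a.symm x)) := by
    intro x y hxy
    have := (h (a.symm x) (a.symm y)).1 (by simpa using hxy)
    exact this
  let e : Fin m ≃o Fin m := hmono.orderIsoOfSurjective _
    (fun y => ⟨a (b.symm y), by simp⟩)
  have he : e = OrderIso.refl _ := Subsingleton.elim _ _
  ext k
  have h2 : e (a k) = a k := by rw [he]; rfl
  have h3 : e (a k) = b k := by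
    change b (a.symm (a k)) = b k
    simp
  rw [← h2, h3]

theorem strictMono_image_unique {m n : ℕ} (f g : Fin m → Fin n) (hf : StrictMono f)
    (hg : StrictMono g) (h : Finset.univ.image f = Finset.univ.image g) : f = g := by
  apply (StrictMono.range_inj hf hg).1
  have := congrArg (fun s : Finset (Fin n) => (s : Set (Fin n))) h
  simpa using this

theorem occurs_card {m n : ℕ} (τ : Equiv.Perm (Fin m)) (α : Finset (Fin n)) :
    {σ : Equiv.Perm (Fin n) | OccursOn τ σ α}.ncard * m.factorial ≤ n.factorial := by
  by_cases hne : ∃ f : Fin m → Fin n, StrictMono f ∧ Finset.univ.image f = α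
  · obtain ⟨f, hf, hfα⟩ := hne
    let F : Fin m ↪ Fin n := ⟨f, hf.injective⟩
    let G : {σ : Equiv.Perm (Fin n) | OccursOn τ σ α} × Equiv.Perm (Fin m) →
        Equiv.Perm (Fin n) := fun p => p.1.1 * p.2.viaFintypeEmbedding F
    have hocc : ∀ σ : Equiv.Perm (Fin n), OccursOn τ σ α →
        ∀ k l, σ (f k) < σ (f l) ↔ τ k < τ l := by
      rintro σ ⟨g, hg, hgα, h⟩
      have := strictMono_image_unique f g hf hg (by rw [hfα, hgα])
      rw [this]; exact h
    have hG : ∀ p k, G p (f k) = p.1.1 (f (p.2 k)) := by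
      intro p k
      have := Equiv.Perm.viaFintypeEmbedding_apply_image p.2 F k
      change p.1.1 (p.2.viaFintypeEmbedding F (F k)) = p.1.1 (F (p.2 k))
      rw [this]
    have hinj : Function.Injective G := by
      rintro ⟨σ, π⟩ ⟨σ', π'⟩ h
      have h1 : τ * π = τ * π' := by
        apply perm_eq_of_lt_iff
        intro k l
        have e1 := hocc σ.1 σ.2 (π k) (π l)
        have e2 := hocc σ'.1 σ'.2 (π' k) (π' l)
        have a1 := hG (σ, π)
        have a2 := hG (σ', π')
        rw [← h] at a2
        have b1 := (a1 k).symm.trans (a2 k)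
        have b2 := (a1 l).symm.trans (a2 l)
        simp only at b1 b2
        rw [b1, b2] at e1
        exact e1.symm.trans e2
      have h2 : π = π' := mul_left_cancel h1
      subst h2
      have h3 : σ.1 = σ'.1 := mul_right_cancel h
      rw [Subtype.ext h3]
    have := Nat.card_le_card_of_injective G hinj
    rw [Nat.card_prod, Nat.card_coe_set_eq, Nat.card_eq_fintype_card,
      Nat.card_eq_fintype_card, Fintype.card_perm, Fintype.card_perm, Fintype.card_fin,
      Fintype.card_fin] at this
    exact this
  · have : {σ : Equiv.Perm (Fin n) | OccursOn τ σ α} = ∅ := by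
      ext σ
      simp only [Set.mem_setOf_eq, Set.mem_empty_iff_false, iff_false]
      rintro ⟨f, h1, h2, -⟩
      exact hne ⟨f, h1, h2⟩
    rw [this]; simp

theorem unifProb_nonneg' {n : ℕ} (E : Set (Equiv.Perm (Fin n))) : 0 ≤ unifProb E := by
  unfold unifProb; positivity

theorem ncard_perm_le {n : ℕ} (E : Set (Equiv.Perm (Fin n))) : E.ncard ≤ n.factorial := by
  have := Set.ncard_le_ncard (Set.subset_univ E)
  rw [Set.ncard_univ, Nat.card_eq_fintype_card, Fintype.card_perm, Fintype.card_fin] at this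
  exact this

theorem unifProb_le_one' {n : ℕ} (E : Set (Equiv.Perm (Fin n))) : unifProb E ≤ 1 := by
  unfold unifProb
  rw [div_le_one (by positivity)]
  exact_mod_cast ncard_perm_le E

theorem one_sub_sum_le_prod' {I : Type*} (s : Finset I) (p : I → ℝ) (h0 : ∀ i, 0 ≤ p i)
    (h1 : ∀ i, p i ≤ 1) : 1 - ∑ i ∈ s, p i ≤ ∏ i ∈ s, (1 - p i) := by
  induction s using Finset.induction_on with
  | empty => simp
  | insert a s ha ih =>
    rw [Finset.sum_insert ha, Finset.prod_insert ha]
    have hP : ∏ i ∈ s, (1 - p i) ≤ 1 :=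
      Finset.prod_le_one (fun i _ => by linarith [h1 i]) (fun i _ => by linarith [h0 i])
    nlinarith [h0 a]

theorem dTVFam_le {n : ℕ} {I : Type*} [Fintype I] [DecidableEq I]
    (X : Equiv.Perm (Fin n) → I → Prop) :
    dTVFamUnif X (fun α => unifProb {σ | X σ α}) ≤
      (3 / 2) * ∑ α, unifProb {σ | X σ α} := by
  set p : I → ℝ := fun α => unifProb {σ | X σ α} with hp
  have p0 : ∀ α, 0 ≤ p α := fun α => unifProb_nonneg' _
  have p1 : ∀ α, p α ≤ 1 := fun α => unifProb_le_one' _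
  set P : (I → Bool) → ℝ := fun x => unifProb {σ | ∀ α, X σ α ↔ x α = true} with hP
  set Q : (I → Bool) → ℝ := fun x => ∏ α, (if x α then p α else 1 - p α) with hQ
  have hfac : (0 : ℝ) < n.factorial := by positivity
  have hPs : ∑ x, P x = 1 := by
    simp only [hP, unifProb]
    rw [← Finset.sum_div, div_eq_one_iff_eq hfac.ne', ← Nat.cast_sum]
    congr 1
    have h := Finset.card_eq_sum_card_fiberwise (s := (Finset.univ : Finset (Equiv.Perm (Fin n))))
      (t := (Finset.univ : Finset (I → Bool)))
      (f := fun σ α => decide (X σ α)) (by intro _ _; simp)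
    rw [Finset.card_univ, Fintype.card_perm, Fintype.card_fin] at h
    rw [h]
    apply Finset.sum_congr rfl
    intro x _
    rw [← Set.ncard_coe_finset]
    congr 1
    ext σ
    simp only [Set.mem_setOf_eq, Finset.coe_filter, Finset.mem_univ, true_and, funext_iff]
    apply forall_congr'
    intro α
    by_cases hX : X σ α <;> cases x α <;> simp [hX]
  have hQs : ∑ x, Q x = 1 := by
    have h := Finset.prod_univ_sum (fun _ : I => (Finset.univ : Finset Bool))
      (fun i b => if b then p i else 1 - p i)
    rw [Fintype.piFinset_univ] at h
    rw [← h]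
    simp
  have hPn : ∀ x, 0 ≤ P x := fun x => unifProb_nonneg' _
  have hQn : ∀ x, 0 ≤ Q x := fun x => Finset.prod_nonneg fun i _ => by
    split_ifs <;> linarith [p0 i, p1 i]
  let z : I → Bool := fun _ => false
  have hQ0 : 1 - ∑ α, p α ≤ Q z := by
    have := one_sub_sum_le_prod' Finset.univ p p0 p1
    simpa [hQ, z] using this
  have hP0 : 1 - ∑ α, p α ≤ P z := by
    simp only [hp, hP, unifProb]
    rw [← Finset.sum_div, sub_le_iff_le_add, ← add_div, le_div_iff₀ hfac, one_mul]
    norm_cast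
    have hcov : (Set.univ : Set (Equiv.Perm (Fin n))) ⊆
        {σ | ∀ α, X σ α ↔ z α = true} ∪ ⋃ α ∈ (Finset.univ : Finset I), {σ | X σ α} := by
      intro σ _
      by_cases h : ∃ α, X σ α
      · right; simpa using h
      · left; push Not at h; simp [z, h]
    have h1 := Set.ncard_le_ncard hcov
    rw [Set.ncard_univ, Nat.card_eq_fintype_card, Fintype.card_perm, Fintype.card_fin] at h1
    refine h1.trans ((Set.ncard_union_le _ _).trans ?_)
    exact Nat.add_le_add (le_of_eq (by simp [z])) (Finset.set_ncard_biUnion_le _ _)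
  have hPz : P z + ∑ x ∈ Finset.univ.erase z, P x = 1 := by
    rw [← hPs]; exact Finset.add_sum_erase _ _ (Finset.mem_univ z)
  have hQz : Q z + ∑ x ∈ Finset.univ.erase z, Q x = 1 := by
    rw [← hQs]; exact Finset.add_sum_erase _ _ (Finset.mem_univ z)
  have hPe : 0 ≤ ∑ x ∈ Finset.univ.erase z, P x := Finset.sum_nonneg fun x _ => hPn x
  have hQe : 0 ≤ ∑ x ∈ Finset.univ.erase z, Q x := Finset.sum_nonneg fun x _ => hQn x
  have hmain : ∑ x, |P x - Q x| ≤ 3 * ∑ α, p α := by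
    rw [← Finset.add_sum_erase _ _ (Finset.mem_univ z)]
    have h1 : ∑ x ∈ Finset.univ.erase z, |P x - Q x| ≤
        ∑ x ∈ Finset.univ.erase z, (P x + Q x) := by
      apply Finset.sum_le_sum
      intro x _
      rw [abs_le]; constructor <;> linarith [hPn x, hQn x]
    rw [Finset.sum_add_distrib] at h1
    have h2 : |P z - Q z| ≤ ∑ α, p α := by
      rw [abs_le]; constructor <;> linarith
    linarith
  have : dTVFamUnif X p = (1 / 2) * ∑ x, |P x - Q x| := by
    simp only [dTVFamUnif, hP, hQ]
  rw [this]
  linarith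

theorem lam_le (n m : ℕ) (hn : 1 ≤ n)
    (hm : (Real.exp 1 * Real.exp (1 / Real.exp 1)) * Real.sqrt n ≤ (m : ℝ))
    (τ : Equiv.Perm (Fin m)) :
    ∑ α : {α : Finset (Fin n) // α.card = m}, unifProb {σ | OccursOn τ σ α.1} ≤
      ((Real.exp (-(1 / Real.exp 1))) ^ m) ^ 2 := by
  have hfn : (0 : ℝ) < n.factorial := by positivity
  have hfm : (0 : ℝ) < m.factorial := by positivity
  have hsn : 0 < Real.sqrt n := Real.sqrt_pos.2 (by exact_mod_cast hn)
  have hmpos : (0 : ℝ) < m := lt_of_lt_of_le (by positivity) hm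
  have h1 : ∀ α : {α : Finset (Fin n) // α.card = m},
      unifProb {σ | OccursOn τ σ α.1} ≤ 1 / m.factorial := by
    intro α
    unfold unifProb
    rw [div_le_div_iff₀ hfn hfm, one_mul]
    exact_mod_cast occurs_card τ α.1
  have hcard : Fintype.card {α : Finset (Fin n) // α.card = m} = n.choose m := by
    rw [Fintype.card_finset_len, Fintype.card_fin]
  have h2 : ∑ α : {α : Finset (Fin n) // α.card = m}, unifProb {σ | OccursOn τ σ α.1} ≤
      (n.choose m : ℝ) * (1 / m.factorial) := by
    refine (Finset.sum_le_sum fun α _ => h1 α).trans ?_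
    rw [Finset.sum_const, Finset.card_univ, hcard, nsmul_eq_mul]
  refine h2.trans ?_
  have h3 : (n.choose m : ℝ) ≤ (n : ℝ) ^ m / m.factorial := Nat.choose_le_pow_div m n
  have h4 : (1 : ℝ) / m.factorial ≤ (Real.exp 1 / m) ^ m := by
    have := Real.pow_div_factorial_le_exp (m : ℝ) hmpos.le m
    rw [div_pow, ← Real.exp_nat_mul, mul_one, le_div_iff₀ (by positivity)]
    calc (1 : ℝ) / m.factorial * m ^ m = m ^ m / m.factorial := by ring
      _ ≤ _ := this
  have h5 : Real.sqrt n * (Real.exp 1 / m) ≤ Real.exp (-(1 / Real.exp 1)) := by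
    rw [Real.exp_neg, ← mul_div_assoc, div_le_iff₀ hmpos, ← div_eq_inv_mul,
      le_div_iff₀ (Real.exp_pos _)]
    linarith
  calc (n.choose m : ℝ) * (1 / m.factorial)
      ≤ ((n : ℝ) ^ m / m.factorial) * (1 / m.factorial) := by gcongr
    _ = (n : ℝ) ^ m * ((1 / m.factorial) * (1 / m.factorial)) := by ring
    _ ≤ (n : ℝ) ^ m * ((Real.exp 1 / m) ^ m * (Real.exp 1 / m) ^ m) := by gcongr
    _ = ((Real.sqrt n * (Real.exp 1 / m)) ^ m) ^ 2 := by
        have : (n : ℝ) ^ m = Real.sqrt n ^ m * Real.sqrt n ^ m := by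
          rw [← mul_pow, Real.mul_self_sqrt (by positivity)]
        rw [this]; ring
    _ ≤ _ := by gcongr

/-- Corollary: for patterns of length `j(n) ≥ (e·e^{1/e} + η)·√n`, the joint law of the
pattern-occurrence indicators of a uniformly random permutation converges in total
variation to a family of independent Bernoulli random variables with the same marginals. -/
theorem stmt6 (eta : ℝ) (heta : 0 ≤ eta) (j : ℕ → ℕ) (hmono : Monotone j)
    (hj : ∀ n : ℕ, (Real.exp 1 * Real.exp (1 / Real.exp 1) + eta) * Real.sqrt n ≤ (j n : ℝ))
    (τ : ∀ n, Equiv.Perm (Fin (j n))) :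
    Filter.Tendsto (fun n =>
        dTVFamUnif (I := {α : Finset (Fin n) // α.card = j n})
          (fun σ α => OccursOn (τ n) σ α.1)
          (fun α => unifProb {σ | OccursOn (τ n) σ α.1}))
      Filter.atTop (nhds 0) := by
  have hc : (1 : ℝ) ≤ Real.exp 1 * Real.exp (1 / Real.exp 1) := by
    rw [← Real.exp_add]; exact Real.one_le_exp (by positivity)
  have hj' : ∀ n : ℕ, (Real.exp 1 * Real.exp (1 / Real.exp 1)) * Real.sqrt n ≤ (j n : ℝ) := by
    intro n
    refine le_trans ?_ (hj n)
    gcongr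
    linarith
  have hjt : Tendsto j atTop atTop := by
    rw [← tendsto_natCast_atTop_iff (R := ℝ)]
    have hs : Tendsto (fun n : ℕ => Real.sqrt n) atTop atTop :=
      Real.tendsto_sqrt_atTop.comp tendsto_natCast_atTop_atTop
    refine tendsto_atTop_mono (fun n => ?_) hs
    refine le_trans ?_ (hj' n)
    exact le_mul_of_one_le_left (Real.sqrt_nonneg _) hc
  have hpow : Tendsto (fun n => (3 / 2) * ((Real.exp (-(1 / Real.exp 1))) ^ (j n)) ^ 2)
      atTop (nhds 0) := by
    have h1 : Tendsto (fun k : ℕ => (Real.exp (-(1 / Real.exp 1))) ^ k) atTop (nhds 0) := by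
      apply tendsto_pow_atTop_nhds_zero_of_lt_one (Real.exp_pos _).le
      rw [Real.exp_lt_one_iff]
      have : (0 : ℝ) < 1 / Real.exp 1 := by positivity
      linarith
    have h2 := ((h1.comp hjt).pow 2).const_mul (3 / 2 : ℝ)
    simpa using h2
  refine squeeze_zero' (Eventually.of_forall fun n => ?_) ?_ hpow
  · unfold dTVFamUnif; positivity
  · filter_upwards [eventually_ge_atTop 1] with n hn
    refine (dTVFam_le _).trans ?_
    have := lam_le n (j n) hn (hj' n) (τ n)
    linarith

end
end
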